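/- arXiv:2302.13478 — 6 statements merged into one kernel-verified Lean document; each statement's English description precedes it below -/
import Mathlib

section
/- If ℓ is not congruent to −m modulo 3, then the polynomial X^(2q^ℓ+1) + X + a has exactly 3 roots in F_{q³}. -/
open Polynomial

local notation "K" => AlgebraicClosure (ZMod 2)

section aux
variable {F : Type*} [Field F] [CharP F 2]

/-- the Moebius parametrisation sending 0, 1, ∞ to the three roots -/
def moeb (r s t : F) : F := (r ^ 2 + t * (r + s) ^ 2) / (t * (r + s) + r)

lemma two_z : (2 : F) = 0 := CharTwo.two_eq_zero

lemma pow_iter {F : Type*} [Field F] {x : F} {n : ℕ} (h : x ^ n = x) (k : ℕ) : x ^ n ^ k = x := by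
  induction k with
  | zero => simp
  | succ k ih => rw [pow_succ, pow_mul, ih, h]

lemma add_sigma (n : ℕ) (x y : F) : (x + y) ^ 2 ^ n = x ^ 2 ^ n + y ^ 2 ^ n :=
  add_pow_char_pow x y 2 n

lemma roots_rel {a r s : F} (hr : r ^ 3 + r + a = 0) (hs : s ^ 3 + s + a = 0) (hne : r ≠ s) :
    r ^ 2 + r * s + s ^ 2 = 1 ∧ a = r * s * (r + s) := by
  have h2 : (2 : F) = 0 := two_z
  have h1 : r ^ 2 + r * s + s ^ 2 = 1 := by
    have : (r - s) * (r ^ 2 + r * s + s ^ 2 + 1) = 0 := by linear_combination hr - hs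
    rcases mul_eq_zero.1 this with h | h
    · exact absurd (sub_eq_zero.1 h) hne
    · grind
  refine ⟨h1, ?_⟩
  grind

lemma third {a r s x : F} (hr : r ^ 3 + r + a = 0) (hs : s ^ 3 + s + a = 0) (hne : r ≠ s)
    (hx : x ^ 3 + x + a = 0) : x = r ∨ x = s ∨ x = r + s := by
  have h2 : (2 : F) = 0 := two_z
  obtain ⟨h1, h3⟩ := roots_rel hr hs hne
  have : (x - r) * ((x - s) * (x - (r + s))) = 0 := by grind
  rcases mul_eq_zero.1 this with h | h
  · exact Or.inl (sub_eq_zero.1 h)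
  rcases mul_eq_zero.1 h with h | h
  · exact Or.inr (Or.inl (sub_eq_zero.1 h))
  · exact Or.inr (Or.inr (sub_eq_zero.1 h))

lemma third_root {a r s : F} (hr : r ^ 3 + r + a = 0) (hs : s ^ 3 + s + a = 0) (hne : r ≠ s) :
    (r + s) ^ 3 + (r + s) + a = 0 := by
  have h2 : (2 : F) = 0 := two_z
  obtain ⟨h1, h3⟩ := roots_rel hr hs hne
  grind

lemma tele (x : F) (m : ℕ) :
    ∑ i ∈ Finset.range m, (x + x ^ 2) ^ 2 ^ i = x + x ^ 2 ^ m := by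
  have h2 : (2 : F) = 0 := two_z
  induction m with
  | zero => simp; grind
  | succ k ih =>
    rw [Finset.sum_range_succ, ih, add_sigma, ← pow_mul, ← pow_succ']
    grind

lemma tr_add (x y : F) (m : ℕ) :
    ∑ i ∈ Finset.range m, (x + y) ^ 2 ^ i =
      ∑ i ∈ Finset.range m, x ^ 2 ^ i + ∑ i ∈ Finset.range m, y ^ 2 ^ i := by
  rw [← Finset.sum_add_distrib]
  exact Finset.sum_congr rfl fun i _ => add_sigma i x y

/-- if one root of the cubic is in `F_q`, all are -/
lemma all_roots {m : ℕ} {a r s : F} (ha0 : a ≠ 0)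
    (htr : ∑ i ∈ Finset.range m, a⁻¹ ^ 2 ^ i = (m : F))
    (hr : r ^ 3 + r + a = 0) (hs : s ^ 3 + s + a = 0) (hne : r ≠ s)
    (hrq : r ^ 2 ^ m = r) : s ^ 2 ^ m = s := by
  have h2 : (2 : F) = 0 := two_z
  obtain ⟨h1, h3⟩ := roots_rel hr hs hne
  have hr0 : r ≠ 0 := by rintro rfl; simp at h3; exact ha0 h3
  have hr1 : r + 1 ≠ 0 := by
    intro h; apply ha0
    have : r = 1 := by grind
    subst this; grind
  have e1 : a⁻¹ = (r⁻¹) + ((r + 1)⁻¹ + ((r + 1)⁻¹) ^ 2) := by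
    have : a = r * (r + 1) ^ 2 := by grind
    rw [this]; field_simp; grind
  have hv : ((r + 1)⁻¹) ^ 2 ^ m = (r + 1)⁻¹ := by rw [inv_pow, add_sigma, hrq, one_pow]
  have hri : (r⁻¹) ^ 2 ^ m = r⁻¹ := by rw [inv_pow, hrq]
  rw [e1, tr_add, tele, hv] at htr
  have e2 : (s * r⁻¹) + (s * r⁻¹) ^ 2 = 1 + (r⁻¹ + (r⁻¹ + (r⁻¹) ^ 2)) := by
    field_simp; grind
  have t1 := tele (s * r⁻¹) m
  rw [e2, tr_add, tr_add, tele, hri] at t1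
  simp only [one_pow, Finset.sum_const, Finset.card_range, nsmul_eq_mul, mul_one] at t1
  rw [mul_pow, hri] at t1
  have : (s ^ 2 ^ m - s) * r⁻¹ = 0 := by grind
  rcases mul_eq_zero.1 this with h | h
  · exact sub_eq_zero.1 h
  · exact absurd h (inv_ne_zero hr0)

lemma pow_mod3 {t : F} (h : t ^ 8 = t) (k : ℕ) : t ^ 2 ^ k = t ^ 2 ^ (k % 3) := by
  conv_lhs => rw [← Nat.div_add_mod k 3, pow_add, pow_mul, pow_mul]
  congr 1
  exact pow_iter (by norm_num; exact h) _

lemma caseA {N : ℕ} {a r s x : F} (ha0 : a ≠ 0)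
    (hr : r ^ 3 + r + a = 0) (hs : s ^ 3 + s + a = 0) (hne : r ≠ s)
    (hrq : r ^ 2 ^ N = r) (hsq : s ^ 2 ^ N = s)
    (hx3 : x ^ (2 ^ N) ^ 3 = x) (hk : (N + 1) % 3 ≠ 0)
    (hx : x * (x ^ 2 ^ N) ^ 2 + x + a = 0) : x = r ∨ x = s ∨ x = r + s := by
  have h2 : (2 : F) = 0 := two_z
  obtain ⟨h1, h3⟩ := roots_rel hr hs hne
  by_cases hxc : x = r + s
  · exact Or.inr (Or.inr hxc)
  have hd : x + (r + s) ≠ 0 := by intro h; apply hxc; grind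
  have hr0 : r ≠ 0 := by rintro rfl; simp at h3; exact ha0 h3
  have hc0 : r + s ≠ 0 := by intro h; rw [h] at h3; simp at h3; exact ha0 h3
  set t := r * (x + r) / ((r + s) * (x + (r + s))) with ht
  have hdy : x ^ 2 ^ N + (r + s) ≠ 0 := by
    have := pow_ne_zero (2 ^ N) hd
    rwa [add_sigma, add_sigma, hrq, hsq] at this
  have hts : t ^ 2 ^ N = r * (x ^ 2 ^ N + r) / ((r + s) * (x ^ 2 ^ N + (r + s))) := by
    rw [ht]; simp only [div_pow, mul_pow, add_sigma, hrq, hsq]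
  have htk : t ^ 2 ^ (N + 1) = t := by
    rw [pow_succ, pow_mul, hts, ht]
    generalize x ^ 2 ^ N = y at *
    rw [div_pow, div_eq_div_iff (by positivity) (by positivity)]
    have e1 : r ^ 2 + r * (r + s) + (r + s) ^ 2 = 1 := by
      clear * - h1 h2
      grind
    have e2 : x * y ^ 2 + x + r * (r + s) * s = 0 := by linear_combination hx - h3
    clear * - e1 e2 h2
    grind
  have ht3 : t ^ (2 ^ N) ^ 3 = t := by
    rw [ht]; rw [← pow_mul] at hx3 ⊢
    have := pow_iter hrq 3
    have := pow_iter hsq 3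
    simp only [← pow_mul] at *
    simp only [div_pow, mul_pow, add_sigma, *]
  have ht8 : t ^ 8 = t := by
    have h := pow_iter htk 3
    rw [← pow_mul, show (N + 1) * 3 = N * 3 + 3 by ring, pow_add, pow_mul, pow_mul, ht3] at h
    exact_mod_cast h
  have ht2 : t ^ 2 = t := by
    rw [pow_mod3 ht8] at htk
    have : (N + 1) % 3 = 1 ∨ (N + 1) % 3 = 2 := by omega
    rcases this with h | h <;> rw [h] at htk
    · simpa using htk
    · norm_num at htk
      calc t ^ 2 = (t ^ 4) ^ 2 := by rw [htk]
        _ = t ^ 8 := by ring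
        _ = t := ht8
  have : t = 0 ∨ t = 1 := by
    have : t * (t - 1) = 0 := by linear_combination ht2
    rcases mul_eq_zero.1 this with h | h
    · exact Or.inl h
    · exact Or.inr (sub_eq_zero.1 h)
  rcases this with h | h
  · left
    rw [ht, div_eq_zero_iff] at h
    rcases h with h | h
    · rcases mul_eq_zero.1 h with h | h
      · exact absurd h hr0
      · grind
    · exact absurd h (mul_ne_zero hc0 hd)
  · right; left
    rw [ht, div_eq_one_iff_eq (mul_ne_zero hc0 hd)] at h
    have hs0 : s ≠ 0 := by rintro rfl; simp at h3; exact ha0 h3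
    have : s * (x - s) = 0 := by grind
    rcases mul_eq_zero.1 this with h | h
    · exact absurd h hs0
    · exact sub_eq_zero.1 h

lemma t_cases {t : F} {k : ℕ} (ht8 : t ^ 8 = t) (hk : k % 3 = 1 ∨ k % 3 = 2)
    (h : t ^ 2 ^ k * t = t + 1) :
    (k % 3 = 1 ∧ t ^ 3 = t + 1) ∨ (k % 3 = 2 ∧ t ^ 3 = t ^ 2 + 1) := by
  have h2 : (2 : F) = 0 := two_z
  rw [pow_mod3 ht8] at h
  rcases hk with hk | hk <;> rw [hk] at h
  · left; refine ⟨hk, ?_⟩; norm_num at h; linear_combination h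
  · right; refine ⟨hk, ?_⟩; norm_num at h
    have : t ^ 5 = t + 1 := by linear_combination h
    grind

lemma t_conv {t : F} {k : ℕ}
    (h : (k % 3 = 1 ∧ t ^ 3 = t + 1) ∨ (k % 3 = 2 ∧ t ^ 3 = t ^ 2 + 1)) :
    t ^ 8 = t ∧ t ^ 2 ^ k * t = t + 1 := by
  have h2 : (2 : F) = 0 := two_z
  have ht8 : t ^ 8 = t := by
    rcases h with ⟨_, h⟩ | ⟨_, h⟩ <;> grind
  refine ⟨ht8, ?_⟩
  rw [pow_mod3 ht8]
  rcases h with ⟨hk, h⟩ | ⟨hk, h⟩ <;> rw [hk] <;> norm_num <;> grind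

lemma den_ne {a r s t : F} (ha2 : a ^ 2 ≠ a) (ha0 : a ≠ 0)
    (h1 : r ^ 2 + r * s + s ^ 2 = 1) (h3 : a = r * s * (r + s))
    (ht : t ^ 3 = t + 1 ∨ t ^ 3 = t ^ 2 + 1) : t * (r + s) + r ≠ 0 := by
  have h2 : (2 : F) = 0 := two_z
  intro h
  have hrt : r = t * (r + s) := by grind
  generalize hc : r + s = c at *
  have hst : s = (1 + t) * c := by grind
  have hc2 : c ^ 2 * (t ^ 2 + t + 1) = 1 := by grind
  have ha : a = c ^ 3 * (t * (1 + t)) := by grind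
  have ha1 : a ^ 2 = 1 := by
    have e : a ^ 2 = (c ^ 2) ^ 3 * (t * (1 + t)) ^ 2 := by rw [ha]; ring
    have e' : (t * (1 + t)) ^ 2 = (t ^ 2 + t + 1) ^ 3 := by
      clear * - ht h2
      rcases ht with ht | ht <;> grind
    rw [e, e', ← mul_pow, hc2, one_pow]
  have : (a + 1) ^ 2 = 0 := by grind
  have : a + 1 = 0 := by simpa using this
  apply ha2
  grind

lemma moeb_iff {r s t x : F} (hs0 : s ≠ 0) (hr0 : r ≠ 0)
    (hd : t * (r + s) + r ≠ 0) :
    x = moeb r s t ↔ t * (r + s) * (x + (r + s)) = r * (x + r) := by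
  have h2 : (2 : F) = 0 := two_z
  rw [moeb, eq_div_iff hd]
  constructor <;> intro h <;> grind

lemma caseB_fwd {N : ℕ} {a r s x : F} (ha0 : a ≠ 0) 
    (hr : r ^ 3 + r + a = 0) (hs : s ^ 3 + s + a = 0) (hne : r ≠ s)
    (hrq : r ^ 2 ^ N = s) (hsq : s ^ 2 ^ N = r + s)
    (hx3 : x ^ (2 ^ N) ^ 3 = x)
    (hx : x * (x ^ 2 ^ N) ^ 2 + x + a = 0) :
    ∃ t : F, t ^ 8 = t ∧ t ^ 2 ^ (N + 1) * t = t + 1 ∧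
      t * (r + s) * (x + (r + s)) = r * (x + r) := by
  have h2 : (2 : F) = 0 := two_z
  obtain ⟨h1, h3⟩ := roots_rel hr hs hne
  have hr0 : r ≠ 0 := by rintro rfl; simp at h3; exact ha0 h3
  have hs0 : s ≠ 0 := by rintro rfl; simp at h3; exact ha0 h3
  have hc0 : r + s ≠ 0 := by intro h; rw [h] at h3; simp at h3; exact ha0 h3
  have hcq : (r + s) ^ 2 ^ N = r := by rw [add_sigma, hrq, hsq]; grind
  have r1 : r + 1 ≠ 0 := by
    intro h; apply ha0
    have : r = 1 := by grind
    subst this; grind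
  have hd : x + (r + s) ≠ 0 := by
    intro h
    have hxc : x = r + s := by grind
    rw [hxc, hcq] at hx
    have : s * (r + 1) ^ 2 = 0 := by
      clear * - hx hr h2
      linear_combination hx - hr + s * r * h2
    rcases mul_eq_zero.1 this with h | h
    · exact hs0 h
    · exact r1 (by simpa using h)
  have hxr : x + r ≠ 0 := by
    intro h
    have hxc : x = r := by grind
    rw [hxc, hrq] at hx
    have : (r + s) * (s + 1) ^ 2 = 0 := by
      clear * - hx hs h2
      grind
    rcases mul_eq_zero.1 this with h | h
    · exact hc0 h
    · have h : s + 1 = 0 := by simpa using h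
      have : s = 1 := by grind
      subst this; apply ha0; grind
  have hdy : x ^ 2 ^ N + r ≠ 0 := by
    have := pow_ne_zero (2 ^ N) hd
    rwa [add_sigma, hcq] at this
  have hys : x ^ 2 ^ N + s ≠ 0 := by
    have := pow_ne_zero (2 ^ N) hxr
    rwa [add_sigma, hrq] at this
  refine ⟨r * (x + r) / ((r + s) * (x + (r + s))), ?_⟩
  set t := r * (x + r) / ((r + s) * (x + (r + s))) with ht
  have ht0 : t ≠ 0 := by rw [ht]; positivity
  have hts : t ^ 2 ^ N = s * (x ^ 2 ^ N + s) / (r * (x ^ 2 ^ N + r)) := by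
    rw [ht]; simp only [div_pow, mul_pow, hcq, hrq]
    rw [add_sigma N x r, add_sigma N x (r + s), hcq, hrq]
  have htk : t ^ 2 ^ (N + 1) * t = t + 1 := by
    rw [pow_succ, pow_mul, hts, ht]
    generalize x ^ 2 ^ N = y at *
    field_simp
    have e2 : x * y ^ 2 + x + r * s * (r + s) = 0 := by linear_combination hx - h3
    clear * - h1 e2 h2
    grind
  refine ⟨?_, htk, ?_⟩
  · have k1 : t ^ 2 ^ (N + 1) = 1 + t⁻¹ := by field_simp; linear_combination htk
    have k2 : (t ^ 2 ^ (N + 1)) ^ 2 ^ (N + 1) = 1 + (1 + t⁻¹)⁻¹ := by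
      nth_rewrite 1 [k1]; rw [add_sigma, one_pow, inv_pow, k1]
    have hn : 1 + t⁻¹ ≠ 0 := by rw [← k1]; positivity
    have hn' : t + 1 ≠ 0 := by rw [← htk]; positivity
    have k3 : ((t ^ 2 ^ (N + 1)) ^ 2 ^ (N + 1)) ^ 2 ^ (N + 1) = t := by
      rw [k2, add_sigma, one_pow, inv_pow, add_sigma, one_pow, inv_pow, k1]
      have : 1 + (1 + t⁻¹)⁻¹ = (t + 1)⁻¹ := by
        field_simp; clear * - h2; grind
      rw [this, inv_inv]; clear * - h2; grind
    have ht3 : t ^ (2 ^ N) ^ 3 = t := by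
      have q1 : r ^ (2 ^ N) ^ 3 = r := by rw [pow_succ, pow_succ, pow_one, pow_mul, pow_mul, hrq, hsq, hcq]
      have q2 : (r + s) ^ (2 ^ N) ^ 3 = r + s := by
        rw [pow_succ, pow_succ, pow_one, pow_mul, pow_mul, hcq, hrq, hsq]
      rw [ht]
      rw [← pow_mul] at *
      rw [div_pow, mul_pow, mul_pow, add_sigma _ x r, add_sigma _ x (r + s), q1, q2, hx3]
    rw [← pow_mul, ← pow_mul] at k3
    rw [show 2 ^ (N + 1) * (2 ^ (N + 1) * 2 ^ (N + 1)) = (2 ^ N) ^ 3 * 8 by ring, pow_mul, ht3] at k3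
    exact k3
  · rw [ht]; field_simp

lemma caseB_bwd {m N : ℕ} {a r s t x : F} (ha0 : a ≠ 0)
    (hr : r ^ 3 + r + a = 0) (hs : s ^ 3 + s + a = 0) (hne : r ≠ s)
    (hrq : r ^ 2 ^ N = s) (hsq : s ^ 2 ^ N = r + s)
    (hrm : r ^ (2 ^ m) ^ 3 = r) (hsm : s ^ (2 ^ m) ^ 3 = s)
    (ht8 : t ^ 8 = t) (htk : t ^ 2 ^ (N + 1) * t = t + 1)
    (hd : t * (r + s) + r ≠ 0) (hx : x = moeb r s t) :
    x ^ (2 ^ m) ^ 3 = x ∧ x * (x ^ 2 ^ N) ^ 2 + x + a = 0 := by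
  have h2 : (2 : F) = 0 := two_z
  obtain ⟨h1, h3⟩ := roots_rel hr hs hne
  have hcq : (r + s) ^ 2 ^ N = r := by rw [add_sigma, hrq, hsq]; grind
  have htm : t ^ (2 ^ m) ^ 3 = t := by
    rw [← pow_mul, mul_comm, pow_mul]; exact pow_iter (by norm_num; exact ht8) m
  have ht0 : t ≠ 0 := by rintro rfl; simp at htk
  constructor
  · rw [hx, moeb]
    rw [← pow_mul] at *
    rw [div_pow, add_sigma, add_sigma, mul_pow, mul_pow, pow_right_comm r 2, pow_right_comm (r + s) 2,
      add_sigma, hrm, hsm, htm]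
  · have hy : x ^ 2 ^ N = (s ^ 2 + t ^ 2 ^ N * r ^ 2) / (t ^ 2 ^ N * r + s) := by
      rw [hx, moeb, div_pow, add_sigma, add_sigma, mul_pow, mul_pow, pow_right_comm r 2,
        pow_right_comm (r + s) 2, hcq, hrq]
    have hd' : t ^ 2 ^ N * r + s ≠ 0 := by
      have := pow_ne_zero (2 ^ N) hd
      rwa [add_sigma, mul_pow, hcq, hrq] at this
    rw [pow_succ, pow_mul] at htk
    rw [hy, hx, moeb]
    generalize t ^ 2 ^ N = u at *
    have e0 : (u * r + s) ^ 2 * t = t * (r + s) ^ 2 + r ^ 2 := by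
      clear * - htk h2
      linear_combination r ^ 2 * htk + (u * r * s * t - t * r * s) * h2
    have e1 : (s ^ 2 + u * r ^ 2) ^ 2 * t = t * (r + s) ^ 4 + r ^ 4 := by
      clear * - htk h2
      grind
    have hn : t * (r + s) ^ 2 + r ^ 2 ≠ 0 := by rw [← e0]; positivity
    have e2 : ((s ^ 2 + u * r ^ 2) / (u * r + s)) ^ 2 =
        (t * (r + s) ^ 4 + r ^ 4) / (t * (r + s) ^ 2 + r ^ 2) := by
      rw [← e0, ← e1]; field_simp
    rw [e2]
    have hn' : r ^ 2 + t * (r + s) ^ 2 ≠ 0 := by rwa [add_comm]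
    have e3 : (r ^ 2 + t * (r + s) ^ 2) / (t * (r + s) + r) *
      ((t * (r + s) ^ 4 + r ^ 4) / (t * (r + s) ^ 2 + r ^ 2)) =
        (t * (r + s) ^ 4 + r ^ 4) / (t * (r + s) + r) := by
      rw [add_comm (r ^ 2)]; field_simp
    rw [e3]
    have hc := third_root hr hs hne
    field_simp
    linear_combination t * (r + s) * hc + r * hr

lemma caseB {m N : ℕ} {a r s β : F} (ha0 : a ≠ 0) (ha2 : a ^ 2 ≠ a)
    (hr : r ^ 3 + r + a = 0) (hs : s ^ 3 + s + a = 0) (hne : r ≠ s)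
    (hrq : r ^ 2 ^ N = s) (hsq : s ^ 2 ^ N = r + s)
    (hrm : r ^ (2 ^ m) ^ 3 = r) (hsm : s ^ (2 ^ m) ^ 3 = s)
    (hmN : ∀ x : F, x ^ (2 ^ m) ^ 3 = x → x ^ (2 ^ N) ^ 3 = x)
    (hk : (N + 1) % 3 ≠ 0) (hβ : β ^ 3 = β + 1) :
    {x : F | x ^ (2 ^ m) ^ 3 = x ∧ x * (x ^ 2 ^ N) ^ 2 + x + a = 0}.ncard = 3 := by
  have h2 : (2 : F) = 0 := two_z
  obtain ⟨h1, h3⟩ := roots_rel hr hs hne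
  have hr0 : r ≠ 0 := by rintro rfl; simp at h3; exact ha0 h3
  have hs0 : s ≠ 0 := by rintro rfl; simp at h3; exact ha0 h3
  have hc0 : r + s ≠ 0 := by intro h; rw [h] at h3; simp at h3; exact ha0 h3
  have hk' : (N + 1) % 3 = 1 ∨ (N + 1) % 3 = 2 := by omega
  have hden : ∀ t : F, ((N + 1) % 3 = 1 ∧ t ^ 3 = t + 1 ∨ (N + 1) % 3 = 2 ∧ t ^ 3 = t ^ 2 + 1) →
      t * (r + s) + r ≠ 0 := fun t ht => den_ne ha2 ha0 h1 h3 (by tauto)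
  have hS : {x : F | x ^ (2 ^ m) ^ 3 = x ∧ x * (x ^ 2 ^ N) ^ 2 + x + a = 0} =
      moeb r s '' {t : F | (N + 1) % 3 = 1 ∧ t ^ 3 = t + 1 ∨ (N + 1) % 3 = 2 ∧ t ^ 3 = t ^ 2 + 1} := by
    ext x
    simp only [Set.mem_setOf_eq, Set.mem_image]
    constructor
    · rintro ⟨hx3, hx⟩
      obtain ⟨t, ht8, htk, hte⟩ := caseB_fwd ha0 hr hs hne hrq hsq (hmN x hx3) hx
      have ht := t_cases ht8 hk' htk
      exact ⟨t, ht, ((moeb_iff hs0 hr0 (hden t ht)).2 hte).symm⟩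
    · rintro ⟨t, ht, hx⟩
      obtain ⟨ht8, htk⟩ := t_conv ht
      exact caseB_bwd ha0 hr hs hne hrq hsq hrm hsm ht8 htk (hden t ht) hx.symm
  rw [hS, Set.ncard_image_of_injOn]
  · rw [Set.ncard_eq_three]
    have hb0 : β ≠ 0 := by rintro rfl; simp at hβ
    have hb1 : β ≠ 1 := by rintro rfl; simp at hβ
    have d1 : β ≠ β ^ 2 := by
      intro h; have : β * (β - 1) = 0 := by linear_combination -h
      rcases mul_eq_zero.1 this with h | h
      · exact hb0 h
      · exact hb1 (sub_eq_zero.1 h)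
    have d2 : β ≠ β + β ^ 2 := by
      intro h; exact hb0 (by simpa using h)
    have d3 : β ^ 2 ≠ β + β ^ 2 := by
      intro h; exact hb0 (by simpa using h)
    have key : ∀ t : F, t ^ 3 = t + 1 ↔ t = β ∨ t = β ^ 2 ∨ t = β + β ^ 2 := by
      intro t
      constructor
      · intro h
        exact third (a := 1) (by grind) (by grind) d1 (by grind)
      · rintro (rfl | rfl | rfl) <;> clear * - hβ h2 <;> grind
    rcases hk' with hk1 | hk1
    · refine ⟨β, β ^ 2, β + β ^ 2, d1, d2, d3, ?_⟩
      ext t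
      simp [hk1, key]
    · refine ⟨β + 1, β ^ 2 + 1, β + β ^ 2 + 1, by simpa using d1, by simpa using d2,
        by simpa using d3, ?_⟩
      ext t
      have key2 : t ^ 3 = t ^ 2 + 1 ↔ (t + 1) ^ 3 = (t + 1) + 1 := by
        clear * - h2
        constructor <;> intro h <;> grind
      have hsh : ∀ c : F, t + 1 = c ↔ t = c + 1 := by
        intro c; clear * - h2
        constructor <;> intro h <;> grind
      simp [hk1, key2, key, hsh]
  · intro t ht t' ht' he
    have e1 := (moeb_iff (x := moeb r s t) hs0 hr0 (hden t ht)).1 rfl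
    have e2 := (moeb_iff (x := moeb r s t) hs0 hr0 (hden t' ht')).1 he
    generalize moeb r s t = x at *
    have hx : x + (r + s) ≠ 0 := by
      intro h
      rw [h, mul_zero] at e1
      have : r * s = 0 := by
        clear * - e1 h h2
        linear_combination r * h + e1
      exact mul_ne_zero hr0 hs0 this
    rw [← e2] at e1
    exact mul_right_cancel₀ hc0 (mul_right_cancel₀ hx e1)

theorem mainF [IsAlgClosed F] (m ℓ : ℕ) (hℓ3 : ¬ 3 ∣ ℓ) 
    (a : F) (haq : a ^ 2 ^ m = a) (ha2 : a ^ 2 ≠ a)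
    (htr : ∑ i ∈ Finset.range m, a⁻¹ ^ 2 ^ i = (m : F))
    (hcong : ¬ 3 ∣ (ℓ + m)) :
    {x : F | x ^ (2 ^ m) ^ 3 = x ∧ x * (x ^ 2 ^ (m * ℓ)) ^ 2 + x + a = 0}.ncard = 3 := by
  have h2 : (2 : F) = 0 := two_z
  have ha0 : a ≠ 0 := by rintro rfl; simp at ha2
  have hk : (m * ℓ + 1) % 3 ≠ 0 := by
    have a1 : ℓ % 3 = 1 ∨ ℓ % 3 = 2 := by omega
    have a2 : m % 3 = 0 ∨ m % 3 = 1 ∨ m % 3 = 2 := by omega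
    rw [Nat.add_mod, Nat.mul_mod]
    rcases a1 with a1 | a1 <;> rcases a2 with a2 | a2 | a2 <;> rw [a1, a2] <;> omega
  have hmN : ∀ x : F, x ^ (2 ^ m) ^ 3 = x → x ^ (2 ^ (m * ℓ)) ^ 3 = x := by
    intro x hx
    have := pow_iter hx ℓ
    rwa [← pow_mul, ← pow_mul, show m * (3 * ℓ) = m * ℓ * 3 by ring, pow_mul] at this
  have root_ex : ∀ c d : F, ∃ x : F, x ^ 3 + c * x + d = 0 := by
    intro c d
    have hdeg : (Polynomial.X ^ 3 + (Polynomial.C c * Polynomial.X + Polynomial.C d)).degree = 3 := by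
      compute_degree!
    obtain ⟨x, hx⟩ := IsAlgClosed.exists_root _ (by rw [hdeg]; decide)
    refine ⟨x, ?_⟩
    simpa [Polynomial.IsRoot, add_assoc] using hx
  obtain ⟨β, hβ'⟩ := root_ex 1 1
  have hβ : β ^ 3 = β + 1 := by grind
  obtain ⟨r, hr'⟩ := root_ex 1 a
  have hr : r ^ 3 + r + a = 0 := by simpa using hr'
  have hr1 : r + 1 ≠ 0 := by
    intro h; apply ha0
    have : r = 1 := by grind
    subst this; grind
  obtain ⟨s, hs, hne⟩ : ∃ s : F, s ^ 3 + s + a = 0 ∧ r ≠ s := by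
    have hdeg : (Polynomial.X ^ 2 + (Polynomial.C r * Polynomial.X + Polynomial.C (r ^ 2 + 1))).degree = 2 := by
      compute_degree!
    obtain ⟨s, hs⟩ := IsAlgClosed.exists_root _ (by rw [hdeg]; decide)
    have hs : s ^ 2 + (r * s + (r ^ 2 + 1)) = 0 := by simpa [Polynomial.IsRoot] using hs
    refine ⟨s, by grind, ?_⟩
    rintro rfl
    have : (r + 1) ^ 2 = 0 := by grind
    exact hr1 (by simpa using this)
  have hφ : ∀ x : F, x ^ 3 + x + a = 0 → (x ^ 2 ^ m) ^ 3 + x ^ 2 ^ m + a = 0 := by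
    intro x hx
    have := congrArg (· ^ 2 ^ m) hx
    simp only [add_sigma, haq] at this
    rw [pow_right_comm, this]
    simp
  by_cases hfix : ∃ x : F, x ^ 3 + x + a = 0 ∧ x ^ 2 ^ m = x
  · obtain ⟨x, hx, hxq⟩ := hfix
    have hall : ∀ y : F, y ^ 3 + y + a = 0 → y ^ 2 ^ m = y := by
      intro y hy
      by_cases hxy : x = y
      · rw [← hxy, hxq]
      · exact all_roots ha0 htr hx hy hxy hxq
    have hallN : ∀ y : F, y ^ 3 + y + a = 0 → y ^ 2 ^ (m * ℓ) = y := by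
      intro y hy
      rw [pow_mul]; exact pow_iter (hall y hy) ℓ
    obtain ⟨h1, h3⟩ := roots_rel hr hs hne
    have hr0 : r ≠ 0 := by rintro rfl; simp at h3; exact ha0 h3
    have hs0 : s ≠ 0 := by rintro rfl; simp at h3; exact ha0 h3
    rw [Set.ncard_eq_three]
    refine ⟨r, s, r + s, hne, by simpa using hs0, by simpa using hr0, ?_⟩
    ext y
    simp only [Set.mem_setOf_eq, Set.mem_insert_iff, Set.mem_singleton_iff]
    constructor
    · rintro ⟨hy3, hy⟩
      exact caseA ha0 hr hs hne (hallN r hr) (hallN s hs) (hmN y hy3) hk hy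
    · intro h
      have hy : y ^ 3 + y + a = 0 := by
        rcases h with rfl | rfl | rfl
        · exact hr
        · exact hs
        · exact third_root hr hs hne
      refine ⟨pow_iter (hall y hy) 3, ?_⟩
      rw [hallN y hy]; linear_combination hy
  · push Not at hfix
    have hrs : r ≠ r ^ 2 ^ m := fun h => hfix r hr h.symm
    clear hne hs s
    obtain ⟨s, hrs'⟩ : ∃ s, r ^ 2 ^ m = s := ⟨_, rfl⟩
    have hs := hφ r hr
    rw [hrs'] at hs hrs
    have hc := third_root hr hs hrs
    have hs' : s ^ 2 ^ m = r + s := by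
      rcases third hr hs hrs (hφ s hs) with h | h | h
      · exfalso; apply hfix _ hc
        rw [add_sigma, h, hrs', add_comm]
      · exact absurd h (hfix s hs)
      · exact h
    have hcq : (r + s) ^ 2 ^ m = r := by rw [add_sigma, hrs', hs']; grind
    have q1 : r ^ (2 ^ m) ^ 3 = r := by
      rw [pow_succ, pow_succ, pow_one, pow_mul, pow_mul, hrs', hs', hcq]
    have q2 : s ^ (2 ^ m) ^ 3 = s := by
      rw [pow_succ, pow_succ, pow_one, pow_mul, pow_mul, hs', hcq, hrs']
    have q3 : (r + s) ^ (2 ^ m) ^ 3 = r + s := by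
      rw [pow_succ, pow_succ, pow_one, pow_mul, pow_mul, hcq, hrs', hs']
    have red : ∀ y : F, y ^ (2 ^ m) ^ 3 = y → y ^ 2 ^ (m * ℓ) = y ^ (2 ^ m) ^ (ℓ % 3) := by
      intro y hy
      conv_lhs => rw [← Nat.div_add_mod ℓ 3, pow_mul, pow_add, pow_mul, pow_mul, pow_iter hy]
    have hl : ℓ % 3 = 1 ∨ ℓ % 3 = 2 := by omega
    rcases hl with hl | hl
    · exact caseB ha0 ha2 hr hs hrs (by rw [red r q1, hl, pow_one, hrs'])
        (by rw [red s q2, hl, pow_one, hs']) q1 q2 hmN hk hβ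
    · have hne : r ≠ r + s := by
        intro h
        have hs0 : s = 0 := by simpa using h
        rw [hs0] at hs; apply ha0; simpa using hs
      refine caseB ha0 ha2 hr hc hne ?_ ?_ q1 q3 hmN hk hβ
      · rw [red r q1, hl, pow_two, pow_mul, hrs', hs']
      · rw [red _ q3, hl, pow_two, pow_mul, hcq, hrs']; grind

end aux

/-- Theorem 1.1(1): if `ℓ ≢ -m (mod 3)` then `X^(2q^ℓ+1) + X + a` has exactly 3 roots
in `F_{q³}`, where `q = 2^m`, `a ∈ F_q \ F_2` and `Tr(1/a) = Tr(1)`. -/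
theorem roots_count_eq_three_of_not_cong
    (m ℓ : ℕ) (hm : 0 < m) (hℓ : 0 < ℓ) (hℓ3 : ¬ 3 ∣ ℓ)
    (q : ℕ) (hq : q = 2 ^ m)
    (a : K) (haq : a ^ q = a) (ha2 : a ^ 2 ≠ a)
    (htr : ∑ i ∈ Finset.range m, a⁻¹ ^ 2 ^ i = (m : K))
    (hcong : ¬ 3 ∣ (ℓ + m)) :
    {x : K | x ^ q ^ 3 = x ∧ x ^ (2 * q ^ ℓ + 1) + x + a = 0}.ncard = 3 := by
  subst hq
  have h := mainF m ℓ hℓ3 a haq ha2 htr hcong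
  convert h using 6 with x
  rw [pow_succ, pow_mul, pow_mul]
  ring
end

section
/- If ℓ is congruent to −m modulo 3, then N_ℓ ∈ {0, 9}, and N_ℓ = 9 if and only if D_n(a) = 0, where n := ⌊(q+1)/3⌋. -/
open Polynomial

local notation "K" => AlgebraicClosure (ZMod 2)

section helpers

variable {F : Type*} [Field F]

lemma aux_sol (h2 : (2 : F) = 0) (Φ σ : F →+* F) (a x0 x1 x2 y : F) (ha : a ≠ 0)
    (h0 : Φ x0 * x0 = x0 + a) (h1 : Φ x1 * x1 = x1 + a) (hx2 : Φ x2 * x2 = x2 + a)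
    (s0 : σ x0 = x1) (s1 : σ x1 = x2) (s2 : σ x2 = x0)
    (hy : Φ y = y) (hsy : σ y * (1 + y) = 1) (h01 : x0 ≠ x1) :
    ∃ x, σ x = x ∧ Φ x * x = x + a := by
  have n0 : x0 ≠ 0 := by rintro rfl; apply ha; simpa using h0.symm
  have n1 : x1 ≠ 0 := by rintro rfl; apply ha; simpa using h1.symm
  have n2 : x2 ≠ 0 := by rintro rfl; apply ha; simpa using hx2.symm
  have e0 : Φ x0 = 1 + a / x0 := by field_simp; exact h0
  have e1 : Φ x1 = 1 + a / x1 := by field_simp; exact h1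
  have e2 : Φ x2 = 1 + a / x2 := by field_simp; exact hx2
  have n21 : x2 ≠ x1 := by
    intro h
    apply h01
    apply σ.injective
    rw [s0, s1, h]
  obtain ⟨den, hden⟩ : ∃ d, d = x2 * (1 + y) + x1 + y * x0 := ⟨_, rfl⟩
  obtain ⟨num, hnum⟩ : ∃ d, d = x0 * x2 + x0 * x1 + y * x1 * x2 + y * x0 * x1 := ⟨_, rfl⟩
  have pden : Φ den * (x0 * x1 * x2) = a * num := by
    rw [hden, hnum]
    simp only [map_add, map_mul, map_one, e0, e1, e2, hy]
    field_simp
    linear_combination (x0 * x1 * x2 * (1 + y)) * h2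
  have pnum : Φ num * (x0 * x1 * x2) = a * (num + a * den) := by
    rw [hden, hnum]
    simp only [map_add, map_mul, map_one, e0, e1, e2, hy]
    field_simp
    linear_combination (x0 * x1 * x2 * (1 + y) + a * x1 * x2 + a * y * x0 * x2) * h2
  have dne : den ≠ 0 := by
    intro h
    have hn : num = 0 := by
      rw [h, map_zero, zero_mul] at pden
      rcases mul_eq_zero.1 pden.symm with h | h
      · exact absurd h ha
      · exact h
    have : (x2 - x1) * (x0 - x1) = 0 := by
      rw [hden] at h
      rw [hnum] at hn
      by_cases hc : x0 = x1
      · exact absurd hc h01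
      grind
    rcases mul_eq_zero.1 this with h | h
    · exact n21 (sub_eq_zero.1 h)
    · exact h01 (sub_eq_zero.1 h)
  have pdne : Φ den ≠ 0 := by simpa using dne
  have nne : num ≠ 0 := by
    rintro h
    rw [h, mul_zero] at pden
    exact (mul_ne_zero pdne (by positivity)) pden
  have y1 : 1 + y ≠ 0 := by intro h; rw [h] at hsy; simp at hsy
  have sden : σ den * (1 + y) = den := by
    rw [hden]
    simp only [map_add, map_mul, map_one, s0, s1, s2]
    linear_combination (x0 + x1) * hsy + x0 * h2
  have snum : σ num * (1 + y) = num := by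
    rw [hnum]
    simp only [map_add, map_mul, map_one, s0, s1, s2]
    linear_combination (x2 * x0 + x1 * x2) * hsy + x1 * x2 * h2 
  have sdne : σ den ≠ 0 := by simpa using dne
  refine ⟨num / den, ?_, ?_⟩
  · rw [map_div₀, ← mul_div_mul_right _ _ y1, sden, snum]
  · rw [map_div₀]
    have : (x0 * x1 * x2) ≠ 0 := by positivity
    rw [← mul_div_mul_right _ _ this, pden, pnum]
    field_simp

lemma aux_trace (h2 : (2 : F) = 0) [CharP F 2] (w : F) (m : ℕ) :
    ∑ i ∈ Finset.range m, (w ^ 2 + w) ^ 2 ^ i = w ^ 2 ^ m + w := by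
  induction m with
  | zero => simp; linear_combination -w * h2
  | succ k ih =>
    rw [Finset.sum_range_succ, ih, add_pow_char_pow, ← pow_mul, ← pow_succ']
    linear_combination (w ^ 2 ^ k) * h2

lemma aux_tr_add [CharP F 2] (u w : F) (m : ℕ) :
    ∑ i ∈ Finset.range m, (u + w) ^ 2 ^ i =
     ∑ i ∈ Finset.range m, u ^ 2 ^ i + ∑ i ∈ Finset.range m, w ^ 2 ^ i := by
  rw [← Finset.sum_add_distrib]
  exact Finset.sum_congr rfl fun i _ => add_pow_char_pow u w 2 i

lemma aux_tr_root (h2 : (2 : F) = 0) [CharP F 2] (a r : F) (m : ℕ) (ha : a ≠ 0)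
    (hr : r ^ 3 + r + a = 0) (hrq : r ^ 2 ^ m = r)
    (htr : ∑ i ∈ Finset.range m, a⁻¹ ^ 2 ^ i = (m : F)) :
    ∑ i ∈ Finset.range m, r⁻¹ ^ 2 ^ i = (m : F) := by
  have r0 : r ≠ 0 := by rintro rfl; apply ha; simpa using hr
  have r1 : r + 1 ≠ 0 := by
    intro h
    apply ha
    grind
  have e : a⁻¹ = r⁻¹ + (((r + 1)⁻¹) ^ 2 + (r + 1)⁻¹) := by
    have : a = r * (r + 1) ^ 2 := by grind
    rw [this]
    field_simp
    grind
  rw [e, aux_tr_add, aux_trace h2, inv_pow, add_pow_char_pow, hrq] at htr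
  simp only [one_pow] at htr
  rw [← htr]
  linear_combination -(r + 1)⁻¹ * h2

lemma aux_tr_sq (h2 : (2 : F) = 0) [CharP F 2] (r : F) (m : ℕ) (hrq : r ^ 2 ^ m = r) :
    ∑ i ∈ Finset.range m, (r⁻¹ ^ 2) ^ 2 ^ i = ∑ i ∈ Finset.range m, r⁻¹ ^ 2 ^ i := by
  have h := aux_trace h2 r⁻¹ m
  rw [aux_tr_add, inv_pow r (2 ^ m), hrq] at h
  linear_combination h + (r⁻¹ - ∑ i ∈ Finset.range m, r⁻¹ ^ 2 ^ i) * h2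

/-- solutions of w^2+w = c in closed field -/
lemma aux_as [IsAlgClosed F] (b c : F) : ∃ w : F, w ^ 2 + b * w + c = 0 := by
  have : (X ^ 2 + C b * X + C c : F[X]).degree = 2 := by compute_degree!
  obtain ⟨w, hw⟩ := IsAlgClosed.exists_root (X ^ 2 + C b * X + C c : F[X]) (by rw [this]; simp)
  exact ⟨w, by simpa using hw⟩

lemma aux_cub [IsAlgClosed F] (b c : F) : ∃ w : F, w ^ 3 + b * w ^ 2 + c * w + 1 = 0 := by
  have : (X ^ 3 + C b * X ^ 2 + C c * X + 1 : F[X]).degree = 3 := by compute_degree!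
  obtain ⟨w, hw⟩ := IsAlgClosed.exists_root (X ^ 3 + C b * X ^ 2 + C c * X + 1 : F[X])
    (by rw [this]; simp)
  exact ⟨w, by simpa using hw⟩

lemma aux_three (h2 : (2 : F) = 0) [CharP F 2] [IsAlgClosed F] (a r : F) (m : ℕ) (ha : a ≠ 0)
    (hr : r ^ 3 + r + a = 0) (hrq : r ^ 2 ^ m = r)
    (htr : ∑ i ∈ Finset.range m, a⁻¹ ^ 2 ^ i = (m : F)) :
    ∃ s : F, s ^ 3 + s + a = 0 ∧ s ^ 2 ^ m = s ∧ s ≠ r := by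
  have r0 : r ≠ 0 := by rintro rfl; apply ha; simpa using hr
  obtain ⟨w, hw⟩ := aux_as (1 : F) (1 + r⁻¹ ^ 2)
  have hw' : w ^ 2 + w = 1 + r⁻¹ ^ 2 := by linear_combination hw - (1 + r⁻¹ ^ 2) * h2
  have t := aux_trace h2 w m
  rw [hw', aux_tr_add, aux_tr_sq h2 r m hrq, aux_tr_root h2 a r m ha hr hrq htr] at t
  simp only [one_pow, Finset.sum_const, Finset.card_range, nsmul_eq_mul, mul_one] at t
  have hwq : w ^ 2 ^ m = w := by linear_combination -t + (m - w) * h2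
  have hwr : w ^ 2 * r ^ 2 + w * r ^ 2 = r ^ 2 + 1 := by
    have : r ^ 2 * r⁻¹ ^ 2 = 1 := by field_simp
    linear_combination r ^ 2 * hw' + this
  refine ⟨r * w, ?_, ?_, ?_⟩
  · linear_combination (r * w - r) * hwr + hr + (r * w - r + r ^ 3 * w - r ^ 3) * h2
  · rw [mul_pow, hrq, hwq]
  · intro h
    have w1 : w = 1 := by
      have : r * (w - 1) = 0 := by linear_combination h
      rcases mul_eq_zero.1 this with h | h
      · exact absurd h r0
      · exact sub_eq_zero.1 h
    subst w1
    apply ha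
    grind

lemma aux_dick1 (h2 : (2 : F) = 0) [CharP F 2] [IsAlgClosed F] (a r : F) (m n : ℕ) (ha : a ≠ 0)
    (hn : n = (2 ^ m + 1) / 3)
    (hr : r ^ 3 + r + a = 0) (hrq : r ^ 2 ^ m = r)
    (htr : ∑ i ∈ Finset.range m, a⁻¹ ^ 2 ^ i = (m : F)) :
    Polynomial.eval a (Polynomial.dickson 1 (1 : F) n) = 0 := by
  have r0 : r ≠ 0 := by rintro rfl; apply ha; simpa using hr
  obtain ⟨c, hc⟩ := aux_as (1 : F) (r⁻¹ ^ 2)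
  have hc' : c ^ 2 + c = r⁻¹ ^ 2 := by linear_combination hc - (r⁻¹ ^ 2) * h2
  have t := aux_trace h2 c m
  rw [hc', aux_tr_sq h2 r m hrq, aux_tr_root h2 a r m ha hr hrq htr] at t
  have hvr : (r * c) * (r * c + r) = 1 := by
    have : r ^ 2 * r⁻¹ ^ 2 = 1 := by field_simp
    linear_combination r ^ 2 * hc' + this
  obtain ⟨v, hv⟩ : ∃ v, v = r * c := ⟨_, rfl⟩
  rw [← hv] at hvr
  have hvq : v ^ 2 ^ m = v + r * m := by
    rw [hv, mul_pow, hrq]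
    linear_combination -r * t - r * c * h2
  have v0 : v ≠ 0 := by rintro h; rw [h] at hvr; simp at hvr
  have h3 : v ^ (3 * n) = 1 := by
    rcases Nat.even_or_odd m with he | ho
    · have hm0 : (m : F) = 0 := (CharP.cast_eq_zero_iff F 2 m).2 he.two_dvd
      have : 2 ^ m = 3 * n + 1 := by
        obtain ⟨k, rfl⟩ := he
        have : 2 ^ (k + k) % 3 = 1 := by
          rw [← two_mul, pow_mul, Nat.pow_mod]; simp
        omega
      rw [hm0, mul_zero, add_zero, this, pow_succ] at hvq
      exact mul_right_cancel₀ v0 (by rw [hvq, one_mul])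
    · obtain ⟨k, rfl⟩ := ho
      have hm1 : ((2 * k + 1 : ℕ) : F) = 1 := by push_cast; rw [h2]; ring
      have : 2 ^ (2 * k + 1) + 1 = 3 * n := by
        have : 2 ^ (2 * k + 1) % 3 = 2 := by
          rw [pow_succ, pow_mul, Nat.mul_mod, Nat.pow_mod]; simp
        clear * - this hn
        generalize 2 ^ (2 * k + 1) = z at *
        omega
      rw [← this, pow_succ, hvq, hm1]
      linear_combination hvr
  have ha' : a = v ^ 3 + (v⁻¹) ^ 3 := by
    have : v⁻¹ = v + r := by
      exact (eq_inv_of_mul_eq_one_right hvr).symm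
    rw [this]
    linear_combination hr - 3 * r * hvr + (-2 * r - r^3 - v^3) * h2
  have h1 : v ^ 3 * (v⁻¹) ^ 3 = 1 := by field_simp
  rw [ha', Polynomial.dickson_one_one_eval_add_inv _ _ h1, ← pow_mul, ← pow_mul, inv_pow, h3]
  rw [inv_one]; linear_combination h2

lemma aux_dick2 (h2 : (2 : F) = 0) [CharP F 2] [IsAlgClosed F] (a : F) (m n : ℕ) (ha : a ≠ 0)
    (hn : n = (2 ^ m + 1) / 3)
    (hd : Polynomial.eval a (Polynomial.dickson 1 (1 : F) n) = 0) :
    ∃ r : F, r ^ 3 + r + a = 0 ∧ r ^ 2 ^ m = r := by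
  obtain ⟨b, hb⟩ := aux_as a (1 : F)
  have b0 : b ≠ 0 := by rintro rfl; simp at hb
  obtain ⟨v, hv⟩ := IsAlgClosed.exists_pow_nat_eq b (n := 3) (by norm_num)
  have v0 : v ≠ 0 := by rintro rfl; apply b0; rw [← hv]; simp
  have hab : a = b + b⁻¹ := by
    field_simp
    linear_combination hb - (b ^ 2 + 1) * h2
  rw [hab, Polynomial.dickson_one_one_eval_add_inv _ _ (mul_inv_cancel₀ b0)] at hd
  have hb1 : b ^ n = 1 := by
    have h1 : b ^ n * b⁻¹ ^ n = 1 := by rw [← mul_pow, mul_inv_cancel₀ b0, one_pow]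
    have : (b ^ n - 1) ^ 2 = 0 := by
      linear_combination b ^ n * hd - h1 - b ^ n * h2 + h2 - h2
    exact sub_eq_zero.1 (pow_eq_zero_iff (by norm_num) |>.1 this)
  rw [← hv, ← pow_mul] at hb1
  refine ⟨v + v⁻¹, ?_, ?_⟩
  · have : v * v⁻¹ = 1 := mul_inv_cancel₀ v0
    rw [hab, ← hv]
    field_simp
    linear_combination (v ^ 6 + 2 * v ^ 4 + 2 * v ^ 2 + 1) * h2
  · rw [add_pow_char_pow, inv_pow]
    rcases Nat.even_or_odd m with he | ho
    · have : 2 ^ m = 3 * n + 1 := by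
        obtain ⟨k, rfl⟩ := he
        have : 2 ^ (k + k) % 3 = 1 := by
          rw [← two_mul, pow_mul, Nat.pow_mod]; simp
        omega
      rw [this, pow_succ, hb1, one_mul]
    · obtain ⟨k, rfl⟩ := ho
      have : 2 ^ (2 * k + 1) + 1 = 3 * n := by
        have : 2 ^ (2 * k + 1) % 3 = 2 := by
          rw [pow_succ, pow_mul, Nat.mul_mod, Nat.pow_mod]; simp
        clear * - this hn
        generalize 2 ^ (2 * k + 1) = z at *
        omega
      rw [← this, pow_succ] at hb1
      rw [eq_inv_of_mul_eq_one_left hb1, inv_inv, add_comm]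

lemma aux_eight [CharP F 2] [IsAlgClosed F] : {y : F | y ^ 8 = y}.ncard = 8 := by
  have hsep : (X ^ 8 - X : F[X]).Separable := galois_poly_separable 2 8 (by norm_num)
  have hdeg : (X ^ 8 - X : F[X]).natDegree = 8 := by compute_degree!
  have hne : (X ^ 8 - X : F[X]) ≠ 0 := by intro h; rw [h] at hdeg; simp at hdeg
  have hc : Fintype.card ((X ^ 8 - X : F[X]).rootSet F) = (X ^ 8 - X : F[X]).natDegree :=
    Polynomial.card_rootSet_eq_natDegree hsep (IsAlgClosed.splits _)
  rw [hdeg] at hc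
  have : {y : F | y ^ 8 = y} = (X ^ 8 - X : F[X]).rootSet F := by
    ext y
    rw [mem_rootSet]
    simp [hne, sub_eq_zero]
  rw [← Nat.card_eq_fintype_card] at hc
  rw [this]
  exact hc

lemma aux_count (h2 : (2 : F) = 0) [CharP F 2] [IsAlgClosed F] (S Φ : F →+* F)
    (hfix : ∀ y : F, (S y = y ∧ Φ y = y) ↔ y ^ 8 = y) (a p s : F) (ha : a ≠ 0)
    (hp : p ^ 3 + p + a = 0) (hs : s ^ 3 + s + a = 0) (hps : s ≠ p)
    (Sa : S a = a) (Sp : S p = p) (Ss : S s = s) (Fp : Φ p = p ^ 2) (Fs : Φ s = s ^ 2) :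
    {x : F | S x = x ∧ Φ x * x + x + a = 0}.ncard = 9 := by
  have p0 : p ≠ 0 := by rintro rfl; apply ha; simpa using hp
  have s0 : s ≠ 0 := by rintro rfl; apply ha; simpa using hs
  have sub : s - p ≠ 0 := sub_ne_zero.2 hps
  have key : ∀ y : F, y ^ 8 = y → p + y * s ≠ 0 := by
    intro y hy h
    have hy' := ((hfix y).2 hy).2
    have h' := congrArg Φ h
    simp only [map_add, map_mul, map_zero, Fp, Fs, hy'] at h'
    have : p * (s - p) = 0 := by linear_combination s * h - h'
    exact mul_ne_zero p0 sub this
  have hset : {x : F | S x = x ∧ Φ x * x + x + a = 0} =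
      insert s ((fun y => (p ^ 2 + y * s ^ 2) / (p + y * s)) '' {y : F | y ^ 8 = y}) := by
    ext x
    simp only [Set.mem_setOf_eq, Set.mem_insert_iff, Set.mem_image]
    constructor
    · rintro ⟨hx, hx2⟩
      by_cases hxs : x = s
      · exact Or.inl hxs
      right
      have xs : x - s ≠ 0 := sub_ne_zero.2 hxs
      have x0 : x ≠ 0 := by rintro rfl; apply ha; simpa using hx2
      have ex : Φ x = -(x + a) / x := by field_simp; linear_combination hx2
      have ex1 : Φ x - s ^ 2 = -a * (s - x) / (x * s) := by
        rw [ex]; field_simp; linear_combination -x * hs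
      have ex2 : Φ x - p ^ 2 = -a * (p - x) / (x * p) := by
        rw [ex]; field_simp; linear_combination -x * hp
      have hy8 : (p * (x - p) / (s * (x - s))) ^ 8 = p * (x - p) / (s * (x - s)) := by
        rw [← hfix]
        constructor
        · simp only [map_div₀, map_mul, map_sub, hx, Sp, Ss]
        · simp only [map_div₀, map_mul, map_sub, Fp, Fs, ex1, ex2]
          have : s - x ≠ 0 := by rw [← neg_sub]; exact neg_ne_zero.2 xs
          field_simp
          ring
      refine ⟨p * (x - p) / (s * (x - s)), hy8, ?_⟩
      have := key _ hy8
      rw [div_eq_iff this]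
      field_simp
      linear_combination (p * x - p * s + x * s - x ^ 2) * h2
    · rintro (rfl | ⟨y, hy, rfl⟩)
      · exact ⟨Ss, by rw [Fs]; linear_combination hs⟩
      · have hk := key y hy
        obtain ⟨y1, y2⟩ := (hfix y).2 hy
        have hk2 : p ^ 2 + y * s ^ 2 ≠ 0 := by
          have : Φ (p + y * s) ≠ 0 := (map_ne_zero Φ).2 hk
          simpa [Fp, Fs, y2] using this
        constructor
        · simp only [map_div₀, map_add, map_mul, map_pow, Sp, Ss, y1]
        · simp only [map_div₀, map_add, map_mul, map_pow, Fp, Fs, y2]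
          field_simp
          linear_combination p * hp + y * s * hs
  have hinj : Set.InjOn (fun y => (p ^ 2 + y * s ^ 2) / (p + y * s)) {y : F | y ^ 8 = y} := by
    intro y hy z hz h
    simp only at h
    rw [div_eq_div_iff (key y hy) (key z hz)] at h
    have : (p * s * (s - p)) * (y - z) = 0 := by linear_combination h
    rcases mul_eq_zero.1 this with h | h
    · exact absurd h (mul_ne_zero (mul_ne_zero p0 s0) sub)
    · exact sub_eq_zero.1 h
  have hfin : {y : F | y ^ 8 = y}.Finite := Set.finite_of_ncard_ne_zero (by rw [aux_eight]; simp)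
  rw [hset, Set.ncard_insert_of_notMem _ (hfin.image _), Set.ncard_image_of_injOn hinj, aux_eight]
  rintro ⟨y, hy, h⟩
  simp only at h
  rw [div_eq_iff (key y hy)] at h
  have : p * (s - p) = 0 := by linear_combination -h
  exact mul_ne_zero p0 sub this

lemma aux_fix [CharP F 2] (m e : ℕ) (he : 3 ∣ e) (hcop : Nat.Coprime m e) (y : F) :
    (y ^ 2 ^ (3 * m) = y ∧ y ^ 2 ^ e = y) ↔ y ^ 8 = y := by
  have conv : ∀ k, y ^ 2 ^ k = y ↔ Function.IsPeriodicPt (frobenius F 2) k y := by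
    intro k
    rw [Function.IsPeriodicPt, Function.IsFixedPt, iterate_frobenius]
  rw [show (8 : ℕ) = 2 ^ 3 by norm_num, conv, conv, conv]
  constructor
  · rintro ⟨h1, h2⟩
    have := h1.gcd h2
    have hg : Nat.gcd (3 * m) e = 3 := by
      obtain ⟨k, rfl⟩ := he
      rw [Nat.gcd_mul_left, Nat.Coprime.coprime_mul_left_right hcop]
    rwa [hg] at this
  · intro h
    exact ⟨h.mul_const m, by obtain ⟨k, rfl⟩ := he; exact h.mul_const k⟩

lemma aux_main [CharP F 2] [IsAlgClosed F]
    (m ℓ : ℕ) (hℓ3 : ¬ 3 ∣ ℓ)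
    (q : ℕ) (hq : q = 2 ^ m) (n : ℕ) (hn : n = (q + 1) / 3)
    (a : F) (haq : a ^ q = a) (ha2 : a ^ 2 ≠ a)
    (htr : ∑ i ∈ Finset.range m, a⁻¹ ^ 2 ^ i = (m : F))
    (hcong : 3 ∣ (ℓ + m))
    (N : ℕ)
    (hN : N = {x : F | x ^ q ^ 3 = x ∧ x ^ (2 * q ^ ℓ + 1) + x + a = 0}.ncard) :
    N ∈ ({0, 9} : Set ℕ) ∧
      (N = 9 ↔ Polynomial.eval a (Polynomial.dickson 1 (1 : F) n) = 0) := by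
  have h2 : (2 : F) = 0 := CharTwo.two_eq_zero
  subst hq
  have ha : a ≠ 0 := by rintro rfl; simp at ha2
  obtain ⟨e, he⟩ : ∃ e, e = m * ℓ + 1 := ⟨_, rfl⟩
  have he3 : 3 ∣ e := by
    rw [he]
    have h1 : ℓ % 3 = 1 ∧ m % 3 = 2 ∨ ℓ % 3 = 2 ∧ m % 3 = 1 := by omega
    rw [Nat.dvd_iff_mod_eq_zero]
    rcases h1 with ⟨h1, h3⟩ | ⟨h1, h3⟩ <;> simp [Nat.add_mod, Nat.mul_mod, h1, h3]
  have hcop : Nat.Coprime m e := by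
    rw [he]; simp
  have hqe : 2 * (2 ^ m) ^ ℓ = 2 ^ e := by rw [he, pow_succ, pow_mul, mul_comm]
  have hq3 : (2 ^ m) ^ 3 = 2 ^ (3 * m) := by rw [← pow_mul, mul_comm]
  set Φ : F →+* F := iterateFrobenius F 2 e with hΦ
  set S : F →+* F := iterateFrobenius F 2 (3 * m) with hS
  set σ : F →+* F := iterateFrobenius F 2 m with hσ
  have Φd : ∀ x, Φ x = x ^ 2 ^ e := fun x => iterateFrobenius_def ..
  have Sd : ∀ x, S x = x ^ 2 ^ (3 * m) := fun x => iterateFrobenius_def ..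
  have σd : ∀ x, σ x = x ^ 2 ^ m := fun x => iterateFrobenius_def ..
  have hset : {x : F | x ^ (2 ^ m) ^ 3 = x ∧ x ^ (2 * (2 ^ m) ^ ℓ + 1) + x + a = 0} =
      {x : F | S x = x ∧ Φ x * x + x + a = 0} := by
    ext x
    simp only [Set.mem_setOf_eq, hqe, hq3, Φd, Sd, pow_succ]
  rw [hset] at hN
  have hfix : ∀ y : F, (S y = y ∧ Φ y = y) ↔ y ^ 8 = y := by
    intro y
    rw [Sd, Φd]
    exact aux_fix m e he3 hcop y
  have Sσ : ∀ x, S x = σ (σ (σ x)) := by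
    intro x
    rw [Sd, σd, σd, σd, ← pow_mul, ← pow_mul, ← pow_add, ← pow_add]
    congr 2
    ring
  have comm : ∀ x, Φ (σ x) = σ (Φ x) := by
    intro x
    rw [Φd, Φd, σd, σd, ← pow_mul, ← pow_mul, mul_comm]
  have σa : σ a = a := by rw [σd, haq]
  have Φq : ∀ x, σ x = x → Φ x = x ^ 2 := by
    intro x hx
    rw [Φd, ← hqe, mul_comm, pow_mul]
    congr 1
    rw [σd] at hx
    clear * - hx
    induction ℓ with
    | zero => simp
    | succ k ih => rw [pow_succ, pow_mul, ih, hx]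
  have A : (∃ r : F, r ^ 3 + r + a = 0 ∧ r ^ 2 ^ m = r) → N = 9 := by
    rintro ⟨r, hr, hrq⟩
    obtain ⟨s, hs, hsq, hsr⟩ := aux_three h2 a r m ha hr hrq htr
    rw [← σd] at hrq hsq
    rw [hN]
    exact aux_count h2 S Φ hfix a r s ha hr hs hsr (by simp only [Sσ, σa])
      (by simp only [Sσ, hrq]) (by simp only [Sσ, hsq]) (Φq _ hrq) (Φq _ hsq)
  have B : N ≠ 0 → (∃ r : F, r ^ 3 + r + a = 0 ∧ r ^ 2 ^ m = r) := by
    intro h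
    rw [hN] at h
    obtain ⟨x, hx, hx2⟩ := Set.nonempty_of_ncard_ne_zero h
    have conv : ∀ x, Φ x * x + x + a = 0 ↔ Φ x * x = x + a := by
      intro x
      constructor
      · intro h; linear_combination h - (x + a) * h2
      · intro h; linear_combination h + (x + a) * h2
    have fin : ∀ x, σ x = x → Φ x * x = x + a → (∃ r : F, r ^ 3 + r + a = 0 ∧ r ^ 2 ^ m = r) := by
      intro x h1 h3
      refine ⟨x, ?_, by rw [← σd, h1]⟩
      rw [← conv, Φq x h1] at h3
      linear_combination h3
    rw [conv] at hx2
    by_cases hxx : σ x = x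
    · exact fin x hxx hx2
    obtain ⟨y, hy8, hsy⟩ : ∃ y : F, y ^ 8 = y ∧ σ y * (1 + y) = 1 := by
      have h1 : m % 3 = 1 ∨ m % 3 = 2 := by omega
      have hpow : ∀ (y : F), y ^ 8 = y → ∀ k, y ^ 2 ^ (3 * k) = y := by
        intro y hy k
        induction k with
        | zero => simp
        | succ k ih => rw [mul_add, pow_add, pow_mul, ih]; exact hy
      rcases h1 with h1 | h1
      · obtain ⟨y, hy⟩ := aux_cub (1 : F) 0
        have hy8 : y ^ 8 = y := by grind
        refine ⟨y, hy8, ?_⟩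
        have hm : m = 3 * (m / 3) + 1 := by omega
        rw [σd, hm, pow_add, pow_mul, hpow y hy8]
        linear_combination hy - h2
      · obtain ⟨y, hy⟩ := aux_cub (0 : F) 1
        have hy8 : y ^ 8 = y := by grind
        refine ⟨y, hy8, ?_⟩
        have hm : m = 3 * (m / 3) + 2 := by omega
        rw [σd, hm, pow_add, pow_mul, hpow y hy8]
        grind
    have e1 : Φ (σ x) * σ x = σ x + a := by
      rw [comm, ← map_mul, hx2, map_add, σa]
    have e2 : Φ (σ (σ x)) * σ (σ x) = σ (σ x) + a := by
      rw [comm, ← map_mul, e1, map_add, σa]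
    obtain ⟨z, hz1, hz2⟩ := aux_sol h2 Φ σ a x (σ x) (σ (σ x)) y ha hx2 e1 e2 rfl rfl
      (by rw [← Sσ, hx]) ((hfix y).2 hy8).2 hsy (Ne.symm hxx)
    exact fin z hz1 hz2
  constructor
  · by_cases h : N = 0
    · left; exact h
    · right; exact A (B h)
  · constructor
    · intro h
      obtain ⟨r, hr, hrq⟩ := B (by omega)
      exact aux_dick1 h2 a r m n ha hn hr hrq htr
    · intro h
      exact A (aux_dick2 h2 a m n ha hn h)

end helpers

/-- Theorem 1.1(2): if `ℓ ≡ -m (mod 3)` then the number `N` of roots in `F_{q³}` of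
`X^(2q^ℓ+1) + X + a` is `0` or `9`, and `N = 9` iff `D_n(a) = 0` where `n = ⌊(q+1)/3⌋`. -/
theorem roots_count_mem_zero_nine_iff_dickson
    (m ℓ : ℕ) (hm : 0 < m) (hℓ : 0 < ℓ) (hℓ3 : ¬ 3 ∣ ℓ)
    (q : ℕ) (hq : q = 2 ^ m) (n : ℕ) (hn : n = (q + 1) / 3)
    (a : K) (haq : a ^ q = a) (ha2 : a ^ 2 ≠ a)
    (htr : ∑ i ∈ Finset.range m, a⁻¹ ^ 2 ^ i = (m : K))
    (hcong : 3 ∣ (ℓ + m))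
    (N : ℕ)
    (hN : N = {x : K | x ^ q ^ 3 = x ∧ x ^ (2 * q ^ ℓ + 1) + x + a = 0}.ncard) :
    N ∈ ({0, 9} : Set ℕ) ∧
      (N = 9 ↔ Polynomial.eval a (Polynomial.dickson 1 (1 : K) n) = 0) := by
  have : CharP K 2 := charP_of_injective_algebraMap
    (algebraMap (ZMod 2) K).injective 2
  exact aux_main m ℓ hℓ3 q hq n hn a haq ha2 htr hcong N hN
end

section
/- The roots of D_n(X) in F_q \ F_2 are exactly the elements ζ + ζ⁻¹ where ζ ∈ F_{q²} satisfies ζ^n = 1 and ζ ≠ 1. Moreover, D_n(X) has exactly ⌊q/6⌋ roots in the algebraic closure of F_q that lie outside F_2, and all of these roots lie in F_q \ F_2. -/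
open Polynomial

local notation "K" => AlgebraicClosure (ZMod 2)

lemma arith_aux (m : ℕ) (hm : 0 < m) (hm3 : ¬ 3 ∣ m) (q : ℕ) (hq : q = 2 ^ m) (n : ℕ)
    (hn : n = (q + 1) / 3) :
    n % 2 = 1 ∧ n % 3 ≠ 0 ∧ n = 2 * (q / 6) + 1 ∧ (q = 3 * n + 1 ∨ q + 1 = 3 * n) := by
  have h2 : q % 2 = 0 := by
    obtain ⟨k, rfl⟩ := Nat.exists_eq_succ_of_ne_zero hm.ne'
    rw [hq, pow_succ]; omega
  have h9 : ∀ k, 2 ^ (6 * k) % 9 = 1 := by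
    intro k
    rw [pow_mul, Nat.pow_mod]; norm_num
  have hm' : m = 6 * (m / 6) + m % 6 := by omega
  have hr : m % 6 = 1 ∨ m % 6 = 2 ∨ m % 6 = 4 ∨ m % 6 = 5 := by omega
  have hk := h9 (m / 6)
  have hq9 : q % 9 = 2 ∨ q % 9 = 4 ∨ q % 9 = 7 ∨ q % 9 = 5 := by
    rw [hm', pow_add] at hq
    rcases hr with h | h | h | h <;> rw [h] at hq <;> omega
  omega

lemma quad_aux (x : K) : ∃ z : K, z ≠ 0 ∧ x = z + z⁻¹ := by
  have h : (X ^ 2 - C x * X + 1 : K[X]).degree ≠ 0 := by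
    have : (X ^ 2 - C x * X + 1 : K[X]).degree = 2 := by compute_degree!
    rw [this]; decide
  obtain ⟨z, hz⟩ := IsAlgClosed.exists_root _ h
  simp [IsRoot] at hz
  have h0 : z ≠ 0 := by rintro rfl; simp at hz
  refine ⟨z, h0, ?_⟩
  field_simp
  linear_combination -hz

lemma fib_aux (a b : K) (ha : a ≠ 0) (hb : b ≠ 0) (h : a + a⁻¹ = b + b⁻¹) : a = b ∨ a = b⁻¹ := by
  have : (a - b) * (a * b - 1) = 0 := by
    field_simp at h
    linear_combination h
  rcases mul_eq_zero.1 this with h | h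
  · left; exact sub_eq_zero.1 h
  · right; exact eq_inv_of_mul_eq_one_left (sub_eq_zero.1 h)

lemma odd_aux (n : ℕ) (z : K) (h0 : z ≠ 0) : z ^ n + (z⁻¹) ^ n = 0 ↔ z ^ n = 1 := by
  have h0' : z ^ n ≠ 0 := pow_ne_zero _ h0
  constructor
  · intro h
    have h1 := CharTwo.add_eq_zero.1 h
    rw [inv_pow, ← mul_left_inj' h0', inv_mul_cancel₀ h0', ← pow_two] at h1
    have : (z ^ n - 1) ^ 2 = 0 := by
      rw [sub_sq, h1]
      have := CharTwo.two_eq_zero (R := K)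
      linear_combination (1 - z ^ n) * this
    exact sub_eq_zero.1 (pow_eq_zero_iff (two_ne_zero) |>.1 this)
  · intro h
    rw [inv_pow, h]; simp [CharTwo.add_self_eq_zero]

lemma set_aux (n : ℕ) (h3 : n % 3 ≠ 0) (hn0 : n ≠ 0) (x : K) :
    (x ^ 2 ≠ x ∧ Polynomial.eval x (Polynomial.dickson 1 (1 : K) n) = 0) ↔
      ∃ ζ : K, ζ ^ n = 1 ∧ ζ ≠ 1 ∧ x = ζ + ζ⁻¹ := by
  have two := CharTwo.two_eq_zero (R := K)
  constructor
  · rintro ⟨hx, h⟩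
    obtain ⟨z, h0, rfl⟩ := quad_aux x
    rw [dickson_one_one_eval_add_inv _ _ (mul_inv_cancel₀ h0), odd_aux n z h0] at h
    refine ⟨z, h, ?_, rfl⟩
    rintro rfl
    apply hx
    simp [CharTwo.add_self_eq_zero]
  · rintro ⟨z, h, h1, rfl⟩
    have h0 : z ≠ 0 := by rintro rfl; simp [hn0] at h
    rw [dickson_one_one_eval_add_inv _ _ (mul_inv_cancel₀ h0), odd_aux n z h0]
    refine ⟨fun hx => ?_, h⟩
    have : (z + z⁻¹) * (z + z⁻¹ - 1) = 0 := by linear_combination hx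
    rcases mul_eq_zero.1 this with h' | h'
    · have := (odd_aux 1 z h0).1 (by simpa using h')
      exact h1 (by simpa using this)
    · have h3' : z ^ 3 = 1 := by
        field_simp at h'
        linear_combination (z + 1) * h' - two
      have hd3 := orderOf_dvd_of_pow_eq_one h3'
      have hdn := orderOf_dvd_of_pow_eq_one h
      have hc : Nat.Coprime 3 n := (Nat.Prime.coprime_iff_not_dvd Nat.prime_three).2 (by omega)
      have := Nat.eq_one_of_dvd_coprimes hc hd3 hdn
      exact h1 (orderOf_eq_one_iff.1 this)

lemma pow_aux (m q n : ℕ) (hq : q = 2 ^ m) (hqn : q = 3 * n + 1 ∨ q + 1 = 3 * n) (z : K)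
    (h0 : z ≠ 0) (h : z ^ n = 1) : (z + z⁻¹) ^ q = z + z⁻¹ ∧ z ^ q ^ 2 = z := by
  have key : z ^ q = z ∨ z ^ q = z⁻¹ := by
    rcases hqn with e | e
    · left; rw [e, pow_succ, mul_comm 3 n, pow_mul, h]; simp
    · right
      apply eq_inv_of_mul_eq_one_left
      rw [← pow_succ, e, mul_comm 3 n, pow_mul, h]; simp
  have e : (z + z⁻¹) ^ q = z ^ q + (z ^ q)⁻¹ := by
    rw [← inv_pow, hq]; exact add_pow_char_pow z z⁻¹ 2 m
  rw [e, pow_two, pow_mul]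
  rcases key with k | k
  · simp [k]
  · simp [k, add_comm]

lemma count_aux (n k : ℕ) (hn : n = 2 * k + 1) :
    {x : K | ∃ ζ : K, ζ ^ n = 1 ∧ ζ ≠ 1 ∧ x = ζ + ζ⁻¹}.ncard = k := by
  classical
  have hn0 : 0 < n := by omega
  have two := CharTwo.two_eq_zero (R := K)
  let T : Finset K := (nthRootsFinset n (1 : K)).erase 1
  have hT : ∀ z, z ∈ T ↔ z ^ n = 1 ∧ z ≠ 1 := by
    intro z; simp [T, mem_nthRootsFinset hn0, and_comm]
  have hc : T.card = 2 * k := by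
    haveI : NeZero (n : K) := ⟨by rw [hn]; push_cast; rw [two]; simp⟩
    obtain ⟨r, hr⟩ := HasEnoughRootsOfUnity.exists_primitiveRoot K n
    rw [Finset.card_erase_of_mem (by simp [mem_nthRootsFinset hn0]), hr.card_nthRootsFinset, hn]
    simp
  have hs : {x : K | ∃ ζ : K, ζ ^ n = 1 ∧ ζ ≠ 1 ∧ x = ζ + ζ⁻¹} =
      (T.image (fun z => z + z⁻¹) : Finset K) := by
    ext x
    simp only [Set.mem_setOf_eq, Finset.coe_image, Set.mem_image, Finset.mem_coe, hT]
    constructor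
    · rintro ⟨z, a, b, c⟩; exact ⟨z, ⟨a, b⟩, c.symm⟩
    · rintro ⟨z, ⟨a, b⟩, c⟩; exact ⟨z, a, b, c.symm⟩
  rw [hs, Set.ncard_coe_finset]
  have hf := Finset.card_eq_sum_card_image (fun z : K => z + z⁻¹) T
  have : ∀ b ∈ T.image (fun z : K => z + z⁻¹), (T.filter (fun z => z + z⁻¹ = b)).card = 2 := by
    intro b hb
    obtain ⟨z, hz, rfl⟩ := Finset.mem_image.1 hb
    have hz' := (hT z).1 hz
    have h0 : z ≠ 0 := by rintro rfl; simp [hn0.ne'] at hz'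
    have : T.filter (fun w => w + w⁻¹ = z + z⁻¹) = {z, z⁻¹} := by
      ext w
      simp only [Finset.mem_filter, hT, Finset.mem_insert, Finset.mem_singleton]
      constructor
      · rintro ⟨⟨a, b⟩, c⟩
        have w0 : w ≠ 0 := by rintro rfl; simp [hn0.ne'] at a
        exact fib_aux w z w0 h0 c
      · rintro (rfl | rfl)
        · exact ⟨hz', rfl⟩
        · refine ⟨⟨by rw [inv_pow, hz'.1, inv_one], by simpa using hz'.2⟩, ?_⟩
          rw [inv_inv, add_comm]
    rw [this, Finset.card_pair]
    intro h
    have := (odd_aux 1 z h0).1 (by rw [pow_one, pow_one, ← h]; exact CharTwo.add_self_eq_zero z)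
    exact hz'.2 (by simpa using this)
  rw [Finset.sum_congr rfl this, hc] at hf
  simp at hf
  omega

/-- Proposition 1.2: for `3 ∤ m`, `q = 2^m`, `n = ⌊(q+1)/3⌋`, the roots of `D_n` in
`F_q \ F_2` are the elements `ζ + ζ⁻¹` with `ζ ∈ F_{q²}`, `ζ^n = 1`, `ζ ≠ 1`; moreover
`D_n` has exactly `⌊q/6⌋` roots outside `F_2` in the algebraic closure, all lying in `F_q`. -/
theorem dickson_roots_description
    (m : ℕ) (hm : 0 < m) (hm3 : ¬ 3 ∣ m)
    (q : ℕ) (hq : q = 2 ^ m) (n : ℕ) (hn : n = (q + 1) / 3) :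
    ({x : K | x ^ q = x ∧ x ^ 2 ≠ x ∧ Polynomial.eval x (Polynomial.dickson 1 (1 : K) n) = 0}
        = {x : K | ∃ ζ : K, ζ ^ q ^ 2 = ζ ∧ ζ ^ n = 1 ∧ ζ ≠ 1 ∧ x = ζ + ζ⁻¹}) ∧
      {x : K | x ^ 2 ≠ x ∧ Polynomial.eval x (Polynomial.dickson 1 (1 : K) n) = 0}.ncard = q / 6 ∧
      {x : K | x ^ 2 ≠ x ∧ Polynomial.eval x (Polynomial.dickson 1 (1 : K) n) = 0}
        ⊆ {x : K | x ^ q = x} := by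
  obtain ⟨h2, h3, hk, hqn⟩ := arith_aux m hm hm3 q hq n hn
  have hn0 : n ≠ 0 := by omega
  have key := set_aux n h3 hn0
  have z0 : ∀ z : K, z ^ n = 1 → z ≠ 0 := by
    rintro z h rfl; simp [hn0] at h
  refine ⟨?_, ?_, ?_⟩
  · ext x
    simp only [Set.mem_setOf_eq, key]
    constructor
    · rintro ⟨-, z, a, b, c⟩
      exact ⟨z, (pow_aux m q n hq hqn z (z0 z a) a).2, a, b, c⟩
    · rintro ⟨z, -, a, b, rfl⟩
      exact ⟨(pow_aux m q n hq hqn z (z0 z a) a).1, z, a, b, rfl⟩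
  · simp only [key]
    exact count_aux n _ hk
  · intro x hx
    simp only [Set.mem_setOf_eq, key] at hx ⊢
    obtain ⟨z, a, b, rfl⟩ := hx
    exact (pow_aux m q n hq hqn z (z0 z a) a).1
end

section
/- The element b does not lie in F_4, and the sets Λ_0, Λ_1, Λ_2 are pairwise disjoint sets of size 3. Moreover, if m ≡ 0 (mod 3) and c is a cube in F_{q²}, then Γ_ℓ = Λ_0; and if m ≡ 0 (mod 3) and c is not a cube in F_{q²}, then Γ_ℓ = Λ_k for the unique k ∈ {1,2} such that c^((q²−1)/3) = ω^(−kℓ). -/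
open Polynomial


theorem P_fact {F : Type*} [Field F] (h2 : (2:F)=0) (a b e x : F) (he : a * e = 1) (hb : e = b^2+b+1) :
   e^2 * ((1+a^2)*x^9 + a*x^8 + (1+a+a^2)^2*x + a*(1+a)^4) = 
   (x^3+x+a)*(b^2*x^3+e*x^2+(b^2+1)*x+b^4*a)*((b^2+1)*x^3+e*x^2+b^2*x+(b+1)^4*a) := by
  grind

theorem key1 {F : Type*} [Field F] (h2 : (2:F)=0) (a b e ω v u : F) (he : a * e = 1) (hb : e = b^2+b+1) (hω : ω^2+ω+1=0)
   (hv : v^3 * (b+ω^2) = ω*(b+ω)) (hu : v * u = 1) (hb0 : b ≠ 0) :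
   ((e + ω * v + ω^2*u)/b^2)^2*((e+v+u)/b^2) + (e+v+u)/b^2 + a = 0 := by
  have : (e + ω * v + ω^2*u)^2*(e+v+u) + b^4*(e+v+u) + a*b^6 = 0 := by
    grind
  field_simp
  linear_combination this

theorem key2 {F : Type*} [Field F] (h2 : (2:F)=0) (a b e ω v u : F) (he : a * e = 1) (hb : e = b^2+b+1) (hω : ω^2+ω+1=0)
   (hv : v^3 * (b+ω^2) = ω^2*(b+ω)) (hu : v * u = 1) (hb0 : b^2+1 ≠ 0) :
   ((e + ω^2 * v + ω*u)/(b^2+1))^2*((e+v+u)/(b^2+1)) + (e+v+u)/(b^2+1) + a = 0 := by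
  have : (e + ω^2 * v + ω*u)^2*(e+v+u) + (b^2+1)^2*(e+v+u) + a*(b^2+1)^3 = 0 := by
    grind
  field_simp
  linear_combination this

theorem key0 {F : Type*} [Field F] (h2 : (2:F)=0) (a b e ω v u : F) (he : a * e = 1) (hb : e = b^2+b+1) (hω : ω^2+ω+1=0)
   (hv : v^3 * (b+ω^2) = (b+ω)) (hu : v * u = 1) :
   (v+u)^3 + (v+u) + a = 0 := by
  grind

theorem dis1 {F : Type*} [Field F] (h2 : (2:F)=0) (a b e x : F) (he : a * e = 1) (hb : e = b^2+b+1) (h0 : x^3+x+a=0)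
   (h1 : b^2*x^3+e*x^2+(b^2+1)*x+b^4*a=0) : a = 0 := by
  grind

theorem cub1 {F : Type*} [Field F] (h2 : (2:F)=0) (a b e x : F) (he : a * e = 1) (hb : e = b^2+b+1) :
   b^4*(b^2*x^3+e*x^2+(b^2+1)*x+b^4*a) = (b^2*x+e)^3+(b^2*x+e)+a*b^2 := by
  grind

theorem cub2 {F : Type*} [Field F] (h2 : (2:F)=0) (a b e x : F) (he : a * e = 1) (hb : e = b^2+b+1) :
   (b^2+1)^2*((b^2+1)*x^3+e*x^2+b^2*x+(b+1)^4*a) = ((b^2+1)*x+e)^3+((b^2+1)*x+e)+a*(b^2+1) := by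
  grind

theorem sum0 {F : Type*} [Field F] (h2 : (2:F)=0) (a b e ω d u : F) (he : a * e = 1) (hb : e = b^2+b+1) (hω : ω^2+ω+1=0)
   (hv : d * (b+ω^2) = (b+ω)) (hu : d * u = 1) : d + u = a := by
  grind

theorem sum1 {F : Type*} [Field F] (h2 : (2:F)=0) (a b e ω d u : F) (he : a * e = 1) (hb : e = b^2+b+1) (hω : ω^2+ω+1=0)
   (hv : d * (b+ω^2) = ω*(b+ω)) (hu : d * u = 1) : d + u = a*b^2 := by
  grind

theorem sum2 {F : Type*} [Field F] (h2 : (2:F)=0) (a b e ω d u : F) (he : a * e = 1) (hb : e = b^2+b+1) (hω : ω^2+ω+1=0)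
   (hv : d * (b+ω^2) = ω^2*(b+ω)) (hu : d * u = 1) : d + u = a*(b^2+1) := by
  grind

theorem cube_sum {F : Type*} [Field F] (h2 : (2:F)=0) (v : F) (hv : v ≠ 0) : 
   (v+v⁻¹)^3+(v+v⁻¹) = v^3+(v^3)⁻¹ := by
  have h : v * v⁻¹ = 1 := mul_inv_cancel₀ hv
  rw [← inv_pow]
  generalize v⁻¹ = u at *
  grind

theorem cyc_P {F : Type*} [Field F] (h2 : (2:F)=0) (a x y z : F) (h1 : y^2*x+x+a=0) (h3 : z^2*y+y+a=0)
   (h4 : x^2*z+z+a=0) : (1+a^2)*x^9 + a*x^8 + (1+a+a^2)^2*x + a*(1+a)^4 = 0 := by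
  have e1 : y^2*x = x + a := by grind
  have e2 : z^4*y^2 = y^2 + a^2 := by grind
  have e3 : x^8*z^4 = z^4 + a^4 := by grind
  have e4 : x^8 * (z^4*y^2) * x = (z^4*y^2)*x + a^4 * (y^2 * x) := by
    linear_combination (y^2*x) * e3
  grind

theorem solve_v {F : Type*} [Field F] [IsAlgClosed F] (h2 : (2:F)=0) (d y : F) (hd : d ≠ 0) 
   (h : y^3+y = d + d⁻¹) : ∃ v, v^3 = d ∧ y = v + v⁻¹ := by
  obtain ⟨v, hv⟩ := IsAlgClosed.exists_root (X^2 + C y * X + 1 : F[X]) (by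
    have : (X^2 + C y * X + 1 : F[X]).degree = 2 := by compute_degree!
    rw [this]; decide)
  simp only [IsRoot, eval_add, eval_pow, eval_X, eval_mul, eval_C, eval_one] at hv
  have v0 : v ≠ 0 := by rintro rfl; simp at hv
  have hy : y = v + v⁻¹ := by field_simp; grind
  have hdd : d * d⁻¹ = 1 := mul_inv_cancel₀ hd
  have hvv : v * v⁻¹ = 1 := mul_inv_cancel₀ v0
  have : (v^3 + d) * (v^3 + d⁻¹) = 0 := by
    generalize v⁻¹ = u at *
    generalize d⁻¹ = d' at *
    grind
  rcases mul_eq_zero.1 this with h | h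
  · exact ⟨v, by grind, hy⟩
  · refine ⟨v⁻¹, ?_, by rw [inv_inv, hy, add_comm]⟩
    have : v^3 = d⁻¹ := by grind
    rw [inv_pow, this, inv_inv]

theorem inj_v {F : Type*} [Field F] (d v w : F) (hd : d ≠ 0) (hd2 : d^2 ≠ 1) (hv : v^3=d) (hw : w^3=d)
   (h : v + v⁻¹ = w + w⁻¹) : v = w := by
  have v0 : v ≠ 0 := by rintro rfl; simp at hv; exact hd hv.symm
  have w0 : w ≠ 0 := by rintro rfl; simp at hw; exact hd hw.symm
  have : (v - w) * (v*w-1) = 0 := by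
    field_simp at h
    linear_combination h
  rcases mul_eq_zero.1 this with h | h
  · exact sub_eq_zero.1 h
  · exfalso
    apply hd2
    have : v*w = 1 := sub_eq_zero.1 h
    calc d^2 = (v*w)^3 := by rw [mul_pow, hv, hw]; ring
      _ = 1 := by rw [this]; ring

theorem iter_fix {F : Type*} [Field F] (x : F) (n k : ℕ) (h : x^n = x) : x^(n^k) = x := by
  induction k with
  | zero => simp
  | succ k ih => rw [pow_succ, pow_mul, ih, h]

theorem fr_add {F : Type*} [Field F] [CharP F 2] (m q : ℕ) (hq : q = 2^m) (x y : F) : (x+y)^q = x^q+y^q := by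
  subst hq; exact add_pow_char_pow x y 2 m

theorem pow_mod3_s3 {F : Type*} [Field F] (x : F) (h : x^3=1) (n : ℕ) : x^n = x^(n%3) := by
  conv_lhs => rw [← Nat.div_add_mod n 3, pow_add, pow_mul, h, one_pow, one_mul]

theorem twist {F : Type*} [Field F] [CharP F 2] (m q : ℕ) (hq : q = 2^m) (d v ζ : F) (hv0 : v ≠ 0) (hv : v^3=d)
   (hd : (d^q = d ∧ q%3=1) ∨ (d^q*d=1 ∧ q%3=2)) (hζ : v^(q^2) = ζ * v) :
   (v+v⁻¹)^q = ζ⁻¹*v + (ζ⁻¹*v)⁻¹ := by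
  have hz : v^(q^2) = (v^q)^q := by rw [← pow_mul, sq]
  rw [fr_add m q hq, inv_pow]
  rcases hd with ⟨h, hq3⟩ | ⟨h, hq3⟩
  · obtain ⟨η, hη⟩ : ∃ η, v^q = η * v := ⟨v^q/v, by field_simp⟩
    have h3 : η^3 = 1 := by
      have : (v^q)^3 = v^3 := by rw [← pow_mul, mul_comm, pow_mul, hv, h]
      rw [hη, mul_pow] at this
      exact mul_right_cancel₀ (pow_ne_zero 3 hv0) (by rw [this, one_mul])
    have hζ' : ζ = η^2 := by
      apply mul_right_cancel₀ hv0
      rw [← hζ, hz, hη, mul_pow, hη, pow_mod3_s3 η h3 q, hq3]; ring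
    have : ζ⁻¹ = η := by
      rw [hζ']; exact inv_eq_of_mul_eq_one_left (by rw [← h3]; ring)
    rw [this, hη]
  · obtain ⟨η, hη⟩ : ∃ η, v^q = η * v⁻¹ := ⟨v^q*v, by field_simp⟩
    have h3 : η^3 = 1 := by
      have : (v^q)^3 * v^3 = 1 := by rw [← pow_mul, mul_comm q, pow_mul, hv, h]
      rw [hη, mul_pow] at this
      rw [← this]; field_simp
    have h0 : η ≠ 0 := by rintro rfl; simp at h3
    have hζ' : ζ = η := by
      apply mul_right_cancel₀ hv0
      rw [← hζ, hz, hη, mul_pow, inv_pow, hη, pow_mod3_s3 η h3 q, hq3]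
      field_simp
    rw [hζ', hη, add_comm, mul_inv, mul_inv, inv_inv, inv_inv]

theorem twist_iter {F : Type*} [Field F] [CharP F 2] (m q : ℕ) (hq : q = 2^m) (d ζ : F) (hd0 : d ≠ 0)
   (hd : (d^q = d ∧ q%3=1) ∨ (d^q*d=1 ∧ q%3=2)) (h3 : ζ^3 = 1) 
   (hζ : ∀ v, v^3=d → v^(q^2) = ζ * v) (j : ℕ) (v : F) (hv : v^3 = d) :
   (v+v⁻¹)^(q^j) = (ζ⁻¹^j*v) + (ζ⁻¹^j*v)⁻¹ := by
  have h0 : ζ ≠ 0 := by rintro rfl; simp at h3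
  have hv0 : v ≠ 0 := by rintro rfl; simp at hv; exact hd0 hv.symm
  induction j with
  | zero => simp
  | succ j ih =>
    have hw : (ζ⁻¹^j*v)^3 = d := by
      rw [mul_pow, ← pow_mul, mul_comm j, pow_mul, inv_pow ζ 3, h3, hv]; simp
    rw [pow_succ, pow_mul, ih, twist m q hq d _ ζ (by positivity) hw hd (hζ _ hw)]
    rw [pow_succ', mul_assoc]

theorem core {F : Type*} [Field F] [CharP F 2] (m q ℓ : ℕ) (hq : q = 2^m) (d ζ s t η a : F) (hd0 : d ≠ 0)
   (hd2 : d^2 ≠ 1) (ha0 : a ≠ 0) (ht0 : t ≠ 0) (hs : s^q=s) (ht : t^q=t) (hη : η^3=1)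
   (hd : (d^q = d ∧ q%3=1) ∨ (d^q*d=1 ∧ q%3=2)) (h3 : ζ^3 = 1) 
   (hζ : ∀ v, v^3=d → v^(q^2) = ζ * v)
   (key : ∀ v, v^3=d → ((s + η*v+(η*v)⁻¹)/t)^2 * ((s+v+v⁻¹)/t) + (s+v+v⁻¹)/t + a = 0)
   (v x : F) (hv : v^3 = d) (hx : x = (s+v+v⁻¹)/t) : 
   (x^(q^3) = x ∧ x ^ (2*q^ℓ+1) + x + a = 0) ↔ ζ⁻¹^ℓ = η := by
  have h2 : (2:F) = 0 := CharTwo.two_eq_zero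
  have hj : ∀ j, x^(q^j) = (s+ζ⁻¹^j*v+(ζ⁻¹^j*v)⁻¹)/t := by
    intro j
    rw [hx, div_pow, iter_fix t q j ht, add_assoc, fr_add (m*j) (q^j) (by rw [hq, pow_mul]), iter_fix s q j hs,
      twist_iter m q hq d ζ hd0 hd h3 hζ j v hv, add_assoc]
  have hf : x^(q^3) = x := by
    rw [hj, inv_pow, h3, hx]; simp
  have k := key v hv
  rw [← hx] at k
  have hx0 : x ≠ 0 := by
    rintro rfl; simp at k; exact ha0 k
  have hpow : x ^ (2*q^ℓ+1) = (x^(q^ℓ))^2 * x := by rw [← pow_mul, pow_succ, mul_comm 2]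
  rw [hpow, hj ℓ]
  constructor
  · rintro ⟨-, h⟩
    have e : ((s+ζ⁻¹^ℓ*v+(ζ⁻¹^ℓ*v)⁻¹)/t)^2 = ((s + η*v+(η*v)⁻¹)/t)^2 := by
      apply mul_right_cancel₀ hx0
      linear_combination h - k
    have e' := CharTwo.sq_inj.1 e
    rw [div_left_inj' ht0, add_assoc, add_assoc, add_right_inj] at e'
    have hv0 : v ≠ 0 := by rintro rfl; simp at hv; exact hd0 hv.symm
    have := inj_v d _ _ hd0 hd2 (by rw [mul_pow, ← pow_mul, mul_comm ℓ, pow_mul, inv_pow ζ 3, h3, hv]; simp) 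
      (by rw [mul_pow, hη, hv, one_mul]) e'
    exact mul_right_cancel₀ hv0 this
  · intro h
    exact ⟨hf, by rw [h]; exact k⟩

theorem card3 {F : Type*} [Field F] [IsAlgClosed F] (N : ℕ) (d s t ω : F) (hω : ω^3=1) (hω1 : ω ≠ 1) (hd0 : d ≠ 0)
   (hd2 : d^2 ≠ 1) (ht0 : t ≠ 0) (hN : ∀ v : F, v^3=d → v^N = v) :
   {x : F | ∃ v : F, v^N = v ∧ v^3 = d ∧ x = (s+v+v⁻¹)/t}.ncard = 3 := by
  obtain ⟨v, hv⟩ := IsAlgClosed.exists_pow_nat_eq d (n := 3) (by norm_num)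
  have hv0 : v ≠ 0 := by rintro rfl; simp at hv; exact hd0 hv.symm
  have hω0 : ω ≠ 0 := by rintro rfl; simp at hω
  have hv1 : (ω*v)^3 = d := by rw [mul_pow, hω, hv, one_mul]
  have hv2 : (ω^2*v)^3 = d := by rw [mul_pow, ← pow_mul, mul_comm 2, pow_mul, hω, hv]; simp
  have inj : ∀ v w, v^3=d → w^3=d → v ≠ w → (s+v+v⁻¹)/t ≠ (s+w+w⁻¹)/t := by
    intro v w h1 h2 hn h
    rw [div_left_inj' ht0, add_assoc, add_assoc, add_right_inj] at h
    exact hn (inj_v d v w hd0 hd2 h1 h2 h)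
  rw [Set.ncard_eq_three]
  refine ⟨_, _, _, inj v (ω*v) hv hv1 ?_, inj v (ω^2*v) hv hv2 ?_, inj (ω*v) (ω^2*v) hv1 hv2 ?_, ?_⟩
  · intro h; exact hω1 (mul_right_cancel₀ hv0 (by rw [← h, one_mul]))
  · intro h
    have : ω^2 = 1 := (mul_right_cancel₀ hv0 (by rw [← h, one_mul]))
    apply hω1; rw [← hω, pow_succ, this, one_mul]
  · intro h
    have : ω = ω^2 := (mul_right_cancel₀ hv0 h)
    exact hω1 (mul_right_cancel₀ hω0 (by rw [← sq, ← this, one_mul]))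
  · ext x
    simp only [Set.mem_ofPred_eq, Set.mem_insert_iff, Set.mem_singleton_iff]
    constructor
    · rintro ⟨w, -, hw, rfl⟩
      have : (w - v) * ((w-ω*v)*(w-ω^2*v)) = 0 := by
        have : ω^2+ω+1 = 0 := by
          apply mul_left_cancel₀ (sub_ne_zero.2 hω1); linear_combination hω
        grind
      rcases mul_eq_zero.1 this with h | h
      · left; rw [sub_eq_zero.1 h]
      rcases mul_eq_zero.1 h with h | h
      · right; left; rw [sub_eq_zero.1 h]
      · right; right; rw [sub_eq_zero.1 h]
    · rintro (h | h | h)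
      · exact ⟨v, hN _ hv, hv, h⟩
      · exact ⟨_, hN _ hv1, hv1, h⟩
      · exact ⟨_, hN _ hv2, hv2, h⟩

theorem fix6 {F : Type*} [Field F] (q : ℕ) (hq : q%3=1 ∨ q%3=2) (d v : F) (hd0 : d ≠ 0)
   (hd : d^(q^2) = d) (hv : v^3=d) : v^(q^6) = v := by
  have hv0 : v ≠ 0 := by rintro rfl; simp at hv; exact hd0 hv.symm
  obtain ⟨η, hη⟩ : ∃ η, v^(q^2) = η * v := ⟨v^(q^2)/v, by field_simp⟩
  have hq2 : q^2 % 3 = 1 := by rcases hq with h | h <;> simp [Nat.pow_mod, h]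
  have h3 : η^3 = 1 := by
    have : (v^(q^2))^3 = v^3 := by rw [← pow_mul, mul_comm, pow_mul, hv, hd]
    rw [hη, mul_pow] at this
    exact mul_right_cancel₀ (pow_ne_zero 3 hv0) (by rw [this, one_mul])
  have hηq : η^(q^2) = η := by rw [pow_mod3_s3 η h3, hq2, pow_one]
  rw [show q^6 = q^2*q^2*q^2 by ring, pow_mul, pow_mul, hη, mul_pow, hη, mul_pow, mul_pow, hηq, hηq, hη]
  linear_combination v * h3

local notation "K" => AlgebraicClosure (ZMod 2)

/-- Theorem 1.3, parts on `b ∉ F_4`, disjointness and sizes of the `Λ_i`, and the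
determination of `Γ_ℓ` when `m ≡ 0 (mod 3)`. -/
theorem roots_description_m_div_three
    (m ℓ : ℕ) (hm : 0 < m) (hℓ : 0 < ℓ) (hℓ3 : ¬ 3 ∣ ℓ)
    (q : ℕ) (hq : q = 2 ^ m)
    (a : K) (haq : a ^ q = a) (ha2 : a ^ 2 ≠ a)
    (htr : ∑ i ∈ Finset.range m, a⁻¹ ^ 2 ^ i = (m : K))
    (ω : K) (hω4 : ω ^ 4 = ω) (hω2 : ω ^ 2 ≠ ω)
    (b : K) (hbq : b ^ q = b) (hb : b ^ 2 + b = a⁻¹ + 1)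
    (c : K) (hc : c = (b + ω) / (b + ω ^ 2))
    (Γ : Set K)
    (hΓ : Γ = {x : K | x ^ q ^ 3 = x ∧ x ^ (2 * q ^ ℓ + 1) + x + a = 0})
    (Λ0 Λ1 Λ2 : Set K)
    (hΛ0 : Λ0 = {x : K | ∃ v : K, v ^ q ^ 6 = v ∧ v ^ 3 = c ∧ x = v + v⁻¹})
    (hΛ1 : Λ1 = {x : K | ∃ v : K, v ^ q ^ 6 = v ∧ v ^ 3 = ω * c ∧
      x = (a⁻¹ + v + v⁻¹) / b ^ 2})
    (hΛ2 : Λ2 = {x : K | ∃ v : K, v ^ q ^ 6 = v ∧ v ^ 3 = ω ^ 2 * c ∧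
      x = (a⁻¹ + v + v⁻¹) / (b ^ 2 + 1)}) :
    b ^ 4 ≠ b ∧
    Λ0.ncard = 3 ∧ Λ1.ncard = 3 ∧ Λ2.ncard = 3 ∧
    Disjoint Λ0 Λ1 ∧ Disjoint Λ0 Λ2 ∧ Disjoint Λ1 Λ2 ∧
    (m % 3 = 0 → (∃ y : K, y ^ q ^ 2 = y ∧ y ^ 3 = c) → Γ = Λ0) ∧
    (m % 3 = 0 → ¬ (∃ y : K, y ^ q ^ 2 = y ∧ y ^ 3 = c) →
      ∃ k : ℕ, (k = 1 ∨ k = 2) ∧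
        (∀ j : ℕ, (j = 1 ∨ j = 2) →
          (c ^ ((q ^ 2 - 1) / 3) = (ω ^ (j * ℓ))⁻¹ ↔ j = k)) ∧
        Γ = (if k = 1 then Λ1 else Λ2)) := by
  have h2 : (2:K) = 0 := CharTwo.two_eq_zero
  clear htr
  have ha0 : a ≠ 0 := by rintro rfl; simp at ha2
  obtain ⟨e, he'⟩ : ∃ e, e = a⁻¹ := ⟨_, rfl⟩
  rw [← he'] at hb hΛ1 hΛ2
  have he : a * e = 1 := by rw [he']; exact mul_inv_cancel₀ ha0
  have hbe : e = b^2+b+1 := by grind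
  have heq : e^q = e := by rw [he', inv_pow, haq]
  have hω0 : ω ≠ 0 := by rintro rfl; simp at hω2
  have hω1 : ω ≠ 1 := by rintro rfl; simp at hω2
  have hω : ω^2+ω+1 = 0 := by
    have : (ω * (ω-1)) * (ω^2+ω+1) = 0 := by linear_combination hω4
    rcases mul_eq_zero.1 this with h | h
    · exact absurd h (mul_ne_zero hω0 (sub_ne_zero.2 hω1))
    · exact h
  have hω3 : ω^3 = 1 := by linear_combination (ω-1)*hω
  have hb4 : b^4 ≠ b := by
    intro h
    apply ha2
    have : e * (e + 1) = 0 := by grind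
    rcases mul_eq_zero.1 this with h | h
    · rw [h] at he; simp at he
    · have : e = 1 := by grind
      rw [this, mul_one] at he; rw [he]; simp
  have hb0 : b ≠ 0 := by rintro rfl; simp at hb4
  have hb1 : b^2+1 ≠ 0 := by
    intro h
    have : (b+1)^2 = 0 := by grind
    have : b = 1 := by have := pow_eq_zero_iff (two_ne_zero) |>.1 this; grind
    rw [this] at hb4; simp at hb4
  have hbω : b + ω ≠ 0 := by
    intro h
    have : b = ω := by grind
    rw [this] at hb4; exact hb4 hω4
  have hbω2 : b + ω^2 ≠ 0 := by
    intro h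
    have : b = ω^2 := by grind
    rw [this] at hb4; apply hb4; rw [← pow_mul, mul_comm, pow_mul, hω4]
  have hc0 : c ≠ 0 := by rw [hc]; exact div_ne_zero hbω hbω2
  have hcm : c * (b+ω^2) = b+ω := by rw [hc]; field_simp
  have hq3 : (m % 2 = 0 ∧ q % 3 = 1) ∨ (m % 2 = 1 ∧ q % 3 = 2) := by
    rw [hq]
    have h4 : ∀ n : ℕ, (2^n) % 3 = if n % 2 = 0 then 1 else 2 := by
      intro n
      induction n with
      | zero => simp
      | succ n ih => rw [pow_succ, Nat.mul_mod, ih]; grind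
    rw [h4]; grind
  have hq3' : q % 3 = 1 ∨ q % 3 = 2 := by grind
  have hqq : q^2 % 3 = 1 := by rcases hq3' with h | h <;> simp [Nat.pow_mod, h]
  -- behaviour of the `d_k` under Frobenius
  have hdfr : ∀ k : ℕ, (((ω^k*c)^q = ω^k*c ∧ q%3=1) ∨ ((ω^k*c)^q*(ω^k*c)=1 ∧ q%3=2)) := by
    intro k
    rcases hq3 with ⟨-, h⟩ | ⟨-, h⟩
    · left
      have hωq : ω^q = ω := by rw [pow_mod3_s3 ω hω3, h, pow_one]
      refine ⟨?_, h⟩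
      rw [mul_pow, ← pow_mul, mul_comm k, pow_mul, hωq, hc, div_pow, fr_add m q hq, fr_add m q hq, hbq, hωq,
        ← pow_mul, mul_comm 2, pow_mul, hωq]
    · right
      have hωq : ω^q = ω^2 := by rw [pow_mod3_s3 ω hω3, h]
      refine ⟨?_, h⟩
      have : c^q = (b+ω^2)/(b+ω) := by
        rw [hc, div_pow, fr_add m q hq, fr_add m q hq, hbq, hωq,
        ← pow_mul, mul_comm 2, pow_mul, hωq, ← pow_mul, show 2*2 = 4 by norm_num, hω4]
      rw [mul_pow, ← pow_mul, mul_comm k, pow_mul, hωq, this, hc]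
      have : (ω^2)^k * ω^k = 1 := by rw [← mul_pow, ← pow_succ, hω3, one_pow]
      field_simp
      linear_combination this
  have hd0 : ∀ k : ℕ, ω^k*c ≠ 0 := fun k => mul_ne_zero (pow_ne_zero _ hω0) hc0
  have hdq2 : ∀ k : ℕ, (ω^k*c)^(q^2) = ω^k*c := by
    intro k
    rw [sq, pow_mul]
    rcases hdfr k with ⟨h, -⟩ | ⟨h, -⟩
    · rw [h, h]
    · have : (ω^k*c)^q = (ω^k*c)⁻¹ := eq_inv_of_mul_eq_one_left h
      rw [this, inv_pow, this, inv_inv]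
  have h6 : ∀ k : ℕ, ∀ v : K, v^3 = ω^k*c → v^(q^6) = v :=
    fun k v hv => fix6 q hq3' _ v (hd0 k) (hdq2 k) hv
  have s0 : ω^0*c + (ω^0*c)⁻¹ = a := 
    sum0 h2 a b e ω _ _ he hbe hω (by rw [pow_zero, one_mul, hcm]) (mul_inv_cancel₀ (hd0 0))
  have s1 : ω^1*c + (ω^1*c)⁻¹ = a*b^2 := 
    sum1 h2 a b e ω _ _ he hbe hω (by rw [pow_one, mul_assoc, hcm]) (mul_inv_cancel₀ (hd0 1))
  have s2 : ω^2*c + (ω^2*c)⁻¹ = a*(b^2+1) := 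
    sum2 h2 a b e ω _ _ he hbe hω (by rw [mul_assoc, hcm]) (mul_inv_cancel₀ (hd0 2))
  have hd2 : ∀ k : ℕ, ω^k*c + (ω^k*c)⁻¹ ≠ 0 → (ω^k*c)^2 ≠ 1 := by
    intro k h h'
    apply h
    have : (ω^k*c)⁻¹ = ω^k*c := inv_eq_of_mul_eq_one_left (by rw [← sq, h'])
    rw [this, ← two_mul, h2, zero_mul]
  have hd20 := hd2 0 (by rw [s0]; exact ha0)
  have hd21 := hd2 1 (by rw [s1]; exact mul_ne_zero ha0 (pow_ne_zero _ hb0))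
  have hd22 := hd2 2 (by rw [s2]; exact mul_ne_zero ha0 hb1)
  have hΛ0' : Λ0 = {x : K | ∃ v : K, v ^ q ^ 6 = v ∧ v ^ 3 = ω^0 * c ∧ x = (0 + v + v⁻¹)/1} := by
    rw [hΛ0]; simp
  have hΛ1' : Λ1 = {x : K | ∃ v : K, v ^ q ^ 6 = v ∧ v ^ 3 = ω^1 * c ∧ x = (e + v + v⁻¹)/b^2} := by
    rw [hΛ1]; simp
  clear hΛ0 hΛ1
  have m0 : ∀ x, x ∈ Λ0 ↔ x^3+x+a = 0 := by
    intro x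
    rw [hΛ0']
    constructor
    · rintro ⟨v, -, hv, rfl⟩
      have hv0 : v ≠ 0 := by rintro rfl; exact hd0 0 (by rw [← hv]; simp)
      rw [zero_add, div_one, cube_sum h2 v hv0, hv, s0, ← two_mul, h2, zero_mul]
    · intro h
      obtain ⟨v, hv, hx⟩ := solve_v h2 (ω^0*c) x (hd0 0) (by rw [s0]; grind)
      exact ⟨v, h6 0 v hv, hv, by rw [zero_add, div_one, hx]⟩
  have m1 : ∀ x, x ∈ Λ1 ↔ b^2*x^3+e*x^2+(b^2+1)*x+b^4*a = 0 := by
    intro x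
    rw [hΛ1']
    have cc := cub1 h2 a b e x he hbe
    constructor
    · rintro ⟨v, -, hv, hx⟩
      have hv0 : v ≠ 0 := by rintro rfl; exact hd0 1 (by rw [← hv]; simp)
      have e1 : b^2*x+e = v+v⁻¹ := by rw [hx]; field_simp; linear_combination v * e * h2
      rw [e1, cube_sum h2 v hv0, hv, s1, ← two_mul, h2, zero_mul] at cc
      exact (mul_eq_zero.1 cc).resolve_left (pow_ne_zero _ hb0)
    · intro h
      rw [h, mul_zero] at cc
      obtain ⟨v, hv, hx⟩ := solve_v h2 (ω^1*c) (b^2*x+e) (hd0 1) (by rw [s1]; linear_combination - cc - a*b^2*h2)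
      exact ⟨v, h6 1 v hv, hv, by rw [add_assoc, ← hx]; field_simp; linear_combination -e*h2⟩
  have m2 : ∀ x, x ∈ Λ2 ↔ (b^2+1)*x^3+e*x^2+b^2*x+(b+1)^4*a = 0 := by
    intro x
    rw [hΛ2]
    have cc := cub2 h2 a b e x he hbe
    constructor
    · rintro ⟨v, -, hv, hx⟩
      have hv0 : v ≠ 0 := by rintro rfl; exact hd0 2 (by rw [← hv]; simp)
      have e1 : (b^2+1)*x+e = v+v⁻¹ := by rw [hx]; field_simp; linear_combination v * e * h2
      rw [e1, cube_sum h2 v hv0, hv, s2, ← two_mul, h2, zero_mul] at cc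
      exact (mul_eq_zero.1 cc).resolve_left (pow_ne_zero _ hb1)
    · intro h
      rw [h, mul_zero] at cc
      obtain ⟨v, hv, hx⟩ := solve_v h2 (ω^2*c) ((b^2+1)*x+e) (hd0 2) (by rw [s2]; linear_combination - cc - a*(b^2+1)*h2)
      exact ⟨v, h6 2 v hv, hv, by rw [add_assoc, ← hx]; field_simp; linear_combination -e*h2⟩
  have dj01 : Disjoint Λ0 Λ1 := by
    rw [Set.disjoint_left]; intro x hx0 hx1
    exact ha0 (dis1 h2 a b e x he hbe ((m0 x).1 hx0) ((m1 x).1 hx1))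
  have sumg : ∀ x : K, (x^3+x+a) + (b^2*x^3+e*x^2+(b^2+1)*x+b^4*a) + ((b^2+1)*x^3+e*x^2+b^2*x+(b+1)^4*a) = 0 := by
    intro x; grind
  have dj02 : Disjoint Λ0 Λ2 := by
    rw [Set.disjoint_left]; intro x hx0 hx1
    have := sumg x
    rw [(m0 x).1 hx0, (m2 x).1 hx1, zero_add, add_zero] at this
    exact ha0 (dis1 h2 a b e x he hbe ((m0 x).1 hx0) this)
  have dj12 : Disjoint Λ1 Λ2 := by
    rw [Set.disjoint_left]; intro x hx0 hx1
    have := sumg x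
    rw [(m1 x).1 hx0, (m2 x).1 hx1, add_zero, add_zero] at this
    exact ha0 (dis1 h2 a b e x he hbe this ((m1 x).1 hx0))
  refine ⟨hb4, ?_, ?_, ?_, dj01, dj02, dj12, ?_⟩
  · rw [hΛ0']
    exact card3 (q^6) _ 0 1 ω hω3 hω1 (hd0 0) hd20 one_ne_zero (h6 0)
  · rw [hΛ1']
    exact card3 (q^6) _ e (b^2) ω hω3 hω1 (hd0 1) hd21 (pow_ne_zero _ hb0) (h6 1)
  · rw [hΛ2]
    exact card3 (q^6) _ e (b^2+1) ω hω3 hω1 (hd0 2) hd22 hb1 (h6 2)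
  rw [← forall_and]
  intro hm3
  obtain ⟨ζ, hζd⟩ : ∃ ζ, ζ = c^((q^2-1)/3) := ⟨_, rfl⟩
  rw [← hζd]
  have hq1 : 3 * ((q^2-1)/3) + 1 = q^2 := by omega
  have h9 : ((q^2-1)/3) % 3 = 0 := by
    have : q^2 % 9 = 1 := by
      obtain ⟨t, rfl⟩ : ∃ t, m = 3*t := ⟨m/3, by omega⟩
      rw [hq, ← pow_mul, show 3*t*2 = 6*t by ring, pow_mul, Nat.pow_mod]; norm_num
    omega
  have hζ : ∀ k : ℕ, ∀ v : K, v^3 = ω^k*c → v^(q^2) = ζ * v := by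
    intro k v hv
    rw [← hq1, pow_succ, pow_mul, hv, mul_pow, ← pow_mul, mul_comm k, pow_mul, pow_mod3_s3 ω hω3, h9, hζd]; simp
  have hζ3 : ζ^3 = 1 := by
    rw [hζd, ← pow_mul, mul_comm]
    apply mul_right_cancel₀ hc0
    rw [← pow_succ, hq1, one_mul]
    simpa using hdq2 0
  have hζ0 : ζ ≠ 0 := by rintro h; rw [h] at hζ3; simp at hζ3
  have hΓmem : ∀ x, x ∈ Γ ↔ (x ∈ Λ0 ∧ ζ⁻¹^ℓ = 1) ∨ (x ∈ Λ1 ∧ ζ⁻¹^ℓ = ω) ∨ (x ∈ Λ2 ∧ ζ⁻¹^ℓ = ω^2) := by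
    have c0 : ∀ x ∈ Λ0, x ∈ Γ ↔ ζ⁻¹^ℓ = 1 := by
      intro x hx
      rw [hΛ0'] at hx
      obtain ⟨v, -, hv, hx⟩ := hx
      rw [hΓ]
      refine core m q ℓ hq (ω^0*c) ζ 0 1 1 a (hd0 0) hd20 ha0 one_ne_zero (by rw [zero_pow]; rw [hq]; positivity)
        (one_pow _) (one_pow _) (hdfr 0) hζ3 (hζ 0) ?_ v x hv hx
      intro v hv
      have hv0 : v ≠ 0 := by rintro rfl; exact hd0 0 (by rw [← hv]; simp)
      have := key0 h2 a b e ω v v⁻¹ he hbe hω (by rw [hv, pow_zero, one_mul, hcm]) (mul_inv_cancel₀ hv0)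
      rw [one_mul, zero_add, div_one]
      linear_combination this
    have c1 : ∀ x ∈ Λ1, x ∈ Γ ↔ ζ⁻¹^ℓ = ω := by
      intro x hx
      rw [hΛ1'] at hx
      obtain ⟨v, -, hv, hx⟩ := hx
      rw [hΓ]
      refine core m q ℓ hq (ω^1*c) ζ e (b^2) ω a (hd0 1) hd21 ha0 (pow_ne_zero _ hb0) heq
        (by rw [← pow_mul, mul_comm, pow_mul, hbq]) hω3 (hdfr 1) hζ3 (hζ 1) ?_ v x hv hx
      intro v hv
      have hv0 : v ≠ 0 := by rintro rfl; exact hd0 1 (by rw [← hv]; simp)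
      have := key1 h2 a b e ω v v⁻¹ he hbe hω (by rw [hv, pow_one, mul_assoc, hcm]) (mul_inv_cancel₀ hv0) hb0
      rw [mul_inv, show ω⁻¹ = ω^2 from inv_eq_of_mul_eq_one_left (by rw [← pow_succ, hω3])]
      exact this
    have c2 : ∀ x ∈ Λ2, x ∈ Γ ↔ ζ⁻¹^ℓ = ω^2 := by
      intro x hx
      rw [hΛ2] at hx
      obtain ⟨v, -, hv, hx⟩ := hx
      rw [hΓ]
      refine core m q ℓ hq (ω^2*c) ζ e (b^2+1) (ω^2) a (hd0 2) hd22 ha0 hb1 heq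
        (by rw [fr_add m q hq, one_pow, ← pow_mul, mul_comm, pow_mul, hbq])
        (by rw [← pow_mul, mul_comm, pow_mul, hω3, one_pow]) (hdfr 2) hζ3 (hζ 2) ?_ v x hv hx
      intro v hv
      have hv0 : v ≠ 0 := by rintro rfl; exact hd0 2 (by rw [← hv]; simp)
      have := key2 h2 a b e ω v v⁻¹ he hbe hω (by rw [hv, mul_assoc, hcm]) (mul_inv_cancel₀ hv0) hb1
      rw [mul_inv, show (ω^2)⁻¹ = ω from inv_eq_of_mul_eq_one_left (by rw [← pow_succ', hω3])]
      exact this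
    intro x
    constructor
    · intro hx
      have hx' := hx
      rw [hΓ] at hx'
      obtain ⟨hx3, hxe⟩ := hx'
      have hpow : ∀ y : K, y ^ (2*q^ℓ+1) = (y^(q^ℓ))^2 * y := by
        intro y; rw [← pow_mul, pow_succ, mul_comm 2]
      have frob : ∀ y z : K, z^2*y+y+a = 0 → (z^(q^ℓ))^2*(y^(q^ℓ))+y^(q^ℓ)+a = 0 := by
        intro y z h
        have hQ : q^ℓ = 2^(m*ℓ) := by rw [hq, pow_mul]
        have := congrArg (fun t => t^(q^ℓ)) h
        rw [fr_add _ _ hQ, fr_add _ _ hQ, iter_fix a q ℓ haq, mul_pow, ← pow_mul, mul_comm 2, pow_mul, zero_pow (by rw [hQ]; positivity)] at this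
        exact this
      rw [hpow] at hxe
      have f1 := frob _ _ hxe
      have f2 := frob _ _ f1
      have hz : ((x^(q^ℓ))^(q^ℓ))^(q^ℓ) = x := by
        rw [← pow_mul, ← pow_mul, show q^ℓ*(q^ℓ*q^ℓ) = (q^3)^ℓ by ring]
        exact iter_fix x (q^3) ℓ hx3
      rw [hz] at f2
      have hP := cyc_P h2 a x _ _ hxe f1 f2
      have hF := P_fact h2 a b e x he hbe
      rw [hP, mul_zero] at hF
      rcases mul_eq_zero.1 hF.symm with h | h
      · rcases mul_eq_zero.1 h with h | h
        · have := (m0 x).2 h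
          exact Or.inl ⟨this, (c0 x this).1 hx⟩
        · have := (m1 x).2 h
          exact Or.inr (Or.inl ⟨this, (c1 x this).1 hx⟩)
      · have := (m2 x).2 h
        exact Or.inr (Or.inr ⟨this, (c2 x this).1 hx⟩)
    · rintro (⟨h, h'⟩ | ⟨h, h'⟩ | ⟨h, h'⟩)
      · exact (c0 x h).2 h'
      · exact (c1 x h).2 h'
      · exact (c2 x h).2 h'
  have w12 : ω ≠ ω^2 := fun h => hω2 h.symm
  have w02 : (1:K) ≠ ω^2 := by
    intro h; apply hω1; rw [← hω3, pow_succ, ← h, one_mul]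
  have hωi : ω⁻¹ = ω^2 := inv_eq_of_mul_eq_one_left (by rw [← pow_succ, hω3])
  have hωi2 : (ω^2)⁻¹ = ω := inv_eq_of_mul_eq_one_left (by rw [← pow_succ', hω3])
  constructor
  · rintro ⟨y, hyq, hy⟩
    have hy0 : y ≠ 0 := by rintro rfl; exact hc0 (by rw [← hy]; simp)
    have h1 : ζ = 1 := by
      apply mul_right_cancel₀ hy0
      rw [← hζ 0 y (by rw [hy]; simp), hyq, one_mul]
    ext x
    rw [hΓmem, h1, inv_one, one_pow]
    constructor
    · rintro (h | h | h)
      · exact h.1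
      · exact absurd h.2.symm hω1
      · exact absurd h.2 w02
    · intro h; exact Or.inl ⟨h, rfl⟩
  · intro hn
    have h1 : ζ ≠ 1 := by
      intro h
      obtain ⟨v, hv⟩ := IsAlgClosed.exists_pow_nat_eq c (n := 3) (by norm_num)
      exact hn ⟨v, by rw [hζ 0 v (by rw [hv]; simp), h, one_mul], hv⟩
    have hζc : ζ = ω ∨ ζ = ω^2 := by
      have : (ζ-1)*((ζ-ω)*(ζ-ω^2)) = 0 := by linear_combination hζ3 + (ζ-1)*(hω3 - ζ*hω)
      have := (mul_eq_zero.1 this).resolve_left (sub_ne_zero.2 h1)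
      rcases mul_eq_zero.1 this with h | h
      · exact Or.inl (sub_eq_zero.1 h)
      · exact Or.inr (sub_eq_zero.1 h)
    have hℓr : ℓ % 3 = 1 ∨ ℓ % 3 = 2 := by omega
    have G1 : ζ⁻¹^ℓ = ω → Γ = Λ1 := by
      intro h; ext x; rw [hΓmem, h]; simp [hω1, w12]
    have G2 : ζ⁻¹^ℓ = ω^2 → Γ = Λ2 := by
      intro h; ext x; rw [hΓmem, h]; simp [w02.symm, hω2]
    have e1 : ω^(1*ℓ) = ω^(ℓ%3) := by rw [one_mul, pow_mod3_s3 ω hω3]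
    have e2 : ω^(2*ℓ) = (ω^(ℓ%3))^2 := by rw [mul_comm, pow_mul, pow_mod3_s3 ω hω3]
    have e3 : ζ⁻¹^ℓ = ζ⁻¹^(ℓ%3) := pow_mod3_s3 _ (by rw [inv_pow, hζ3, inv_one]) ℓ
    have w4 : (ω^2)^2 = ω := by rw [← pow_mul]; exact hω4
    rcases hζc with hz | hz <;> rcases hℓr with hr | hr <;> rw [hr] at e1 e2 e3 <;> rw [hz] at e3 ⊢ <;> 
      simp only [hωi, hωi2, pow_one, w4] at e1 e2 e3
    · refine ⟨2, Or.inr rfl, ?_, by rw [if_neg (by norm_num)]; exact G2 (by rw [hz, hωi]; exact e3)⟩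
      rintro j (rfl | rfl)
      · rw [e1, hωi]; simp [w12]
      · rw [e2, hωi2]; simp
    · refine ⟨1, Or.inl rfl, ?_, by rw [if_pos rfl]; exact G1 (by rw [hz, hωi]; exact e3)⟩
      rintro j (rfl | rfl)
      · rw [e1, hωi2]; simp
      · rw [e2, hωi]; simp [w12]
    · refine ⟨1, Or.inl rfl, ?_, by rw [if_pos rfl]; exact G1 (by rw [hz, hωi2]; exact e3)⟩
      rintro j (rfl | rfl)
      · rw [e1, hωi]; simp
      · rw [e2, hωi2]; simp [hω2]
    · refine ⟨2, Or.inr rfl, ?_, by rw [if_neg (by norm_num)]; exact G2 (by rw [hz, hωi2]; exact e3)⟩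
      rintro j (rfl | rfl)
      · rw [e1, hωi2]; simp [hω2]
      · rw [e2, hωi]; simp
end

section
/- If m is not congruent to 0 modulo 3, then there is a unique k ∈ {0,1,2} for which ω^k·c is a cube in F_{q²}; moreover this value k satisfies: if k = 0 and ℓ ≡ m (mod 3) then Γ_ℓ = Λ_0; if k ≠ 0 and ℓ ≡ m (mod 3) then Γ_ℓ = Λ_{3−k}; if k = 0 and ℓ ≡ −m (mod 3) then Γ_ℓ = Λ; and if k ≠ 0 and ℓ ≡ −m (mod 3) then Γ_ℓ = ∅. -/
section helpers
variable {F : Type*} [Field F] [CharP F 2]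

lemma aux_two : (2:F) = 0 := CharP.cast_eq_zero F 2

set_option maxRecDepth 100000 in
lemma nonic_factor (x b A : F) (hA : A = b^2+b+1) :
  (A*(x^3+x)+1)*(A*(b^2*x+A)^3+A*(b^2*x+A)+b^2)*(A*((b^2+1)*x+A)^3+A*((b^2+1)*x+A)+(b^2+1)) =
  (b^2+b)^4 * (x*A*(A*(x+1)^4+(1+A*(x+1)^2)^2)^2+(1+A*(x+1)^2)^4) := by
  subst hA
  have h2 : (2:F)=0 := aux_two
  grind

lemma key1_s4 (a b A ω c c' v w : F) (hA : A = b^2+b+1) (haA : a*A=1) (hω : ω^2 = ω+1)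
  (h1 : v*w=1) (hv : v^3 = ω*c) (hw : w^3 = ω^2*c') (hc : A*c=(b+ω)^2)
  (hcc : c+c'=a) :
  (A+v+w)*((A+v*ω+w*ω^2)+b^2)^2 = a*b^6 := by
  have h2 : (2:F)=0 := aux_two
  grind

lemma key2_s4 (a b A ω c c' v w : F) (hA : A = b^2+b+1) (haA : a*A=1) (hω : ω^2 = ω+1)
  (h1 : v*w=1) (hv : v^3 = ω^2*c) (hw : w^3 = ω*c') (hc : A*c=(b+ω)^2)
  (hcc : c+c'=a) :
  (A+v+w)*((A+v*ω^2+w*ω)+b^2+1)^2 = a*(b^2+1)^3 := by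
  have h2 : (2:F)=0 := aux_two
  grind

lemma cc1 (a b A ω c c' : F) (hA : A = b^2+b+1) (haA : a*A=1) (hω : ω^2 = ω+1)
    (hc : A*c=(b+ω)^2) (hc' : A*c'=(b+ω^2)^2) : A*(ω*c+ω^2*c') = A*(a*b^2) := by
  have h2 : (2:F)=0 := aux_two
  have : ω*(b+ω)^2 + ω^2*(b+ω^2)^2 = b^2 := by clear hc hc' hA haA; grind
  linear_combination ω*hc + ω^2*hc' + this - b^2*haA

lemma cc2 (a b A ω c c' : F) (hA : A = b^2+b+1) (haA : a*A=1) (hω : ω^2 = ω+1)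
    (hc : A*c=(b+ω)^2) (hc' : A*c'=(b+ω^2)^2) : A*(ω^2*c+ω*c') = A*(a*(b^2+1)) := by
  have h2 : (2:F)=0 := aux_two
  have : ω^2*(b+ω)^2 + ω*(b+ω^2)^2 = b^2+1 := by clear hc hc' hA haA; grind
  linear_combination ω^2*hc + ω*hc' + this - (b^2+1)*haA

lemma key0_s4 (v w : F) (h : v*w=1) : (v+w)*(v+w+1)^2 = v^3+w^3 := by
  have h2 : (2:F)=0 := aux_two
  grind

lemma eq_form1 (x y a : F) (h : y^2*x+x+a=0) : x*(y+1)^2 = a := by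
  have h2 : (2:F)=0 := aux_two
  grind

lemma eq_form2 (x y a : F) (h : x*(y+1)^2 = a) : y^2*x+x+a=0 := by
  have h2 : (2:F)=0 := aux_two
  grind

lemma sq_inj (x y : F) (h : (x+1)^2 = (y+1)^2) : x = y := by
  have h2 : (2:F)=0 := aux_two
  have : (x - y)^2 = 0 := by linear_combination h + (-x*y + y^2 - x + y)*h2
  exact sub_eq_zero.1 ((pow_eq_zero_iff two_ne_zero).1 this)

/-- The exponent `(-2)^N` against `2^N`. -/
lemma sig_cases (v : F) (N : ℕ) :
    v ^ ((-2:ℤ)^N) = v ^ (2^N) ∨ v ^ ((-2:ℤ)^N) = (v ^ (2^N))⁻¹ := by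
  rcases Nat.even_or_odd N with h | h
  · left
    rw [h.neg_pow]
    exact_mod_cast zpow_natCast v (2^N)
  · right
    rw [h.neg_pow, zpow_neg]
    congr 1
    exact_mod_cast zpow_natCast v (2^N)

lemma sig_add_inv (v : F) (N : ℕ) :
    (v + v⁻¹) ^ (2^N) = v ^ ((-2:ℤ)^N) + (v ^ ((-2:ℤ)^N))⁻¹ := by
  haveI : Fact (Nat.Prime 2) := ⟨Nat.prime_two⟩
  rw [add_pow_char_pow]
  rcases sig_cases v N with h | h <;> rw [h] <;> simp [add_comm]

lemma pow_mod_nine (m : ℕ) : ∃ d : ℤ, (-2:ℤ)^m = 1 - 3*m + 9*d := by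
  induction m with
  | zero => exact ⟨0, by simp⟩
  | succ n ih =>
    obtain ⟨d, hd⟩ := ih
    exact ⟨n - 2*d, by rw [pow_succ, hd]; push_cast; ring⟩

lemma cube_roots (ω v w : F) (hω : ω^2 = ω+1) (h : v^3 = w^3) : ∃ r : ℕ, v = w * ω^r := by
  have h2 : (2:F)=0 := aux_two
  have : (v-w)*((v-w*ω)*(v-w*ω^2)) = 0 := by grind
  rcases mul_eq_zero.1 this with h | h
  · exact ⟨0, by simpa [sub_eq_zero] using h⟩
  rcases mul_eq_zero.1 h with h | h
  · exact ⟨1, by simpa [sub_eq_zero] using h⟩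
  · exact ⟨2, by simpa [sub_eq_zero] using h⟩

lemma add_inv_inj (v w : F) (hv : v ≠ 0) (hw : w ≠ 0) (h : v + v⁻¹ = w + w⁻¹) :
    v = w ∨ v * w = 1 := by
  have : (v - w)*(v*w-1) = 0 := by
    field_simp at h
    linear_combination h
  rcases mul_eq_zero.1 this with h | h
  · left; exact sub_eq_zero.1 h
  · right; exact sub_eq_zero.1 h

lemma exists_add_inv [IsAlgClosed F] (x d : F) (hd : d ≠ 0) (h : x^3 + x = d + d⁻¹) :
    ∃ v : F, v^3 = d ∧ x = v + v⁻¹ := by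
  have h2 : (2:F)=0 := aux_two
  obtain ⟨v, hv⟩ : ∃ v : F, v^2 + x*v + 1 = 0 := by
    open Polynomial in
    obtain ⟨v, hv⟩ := IsAlgClosed.exists_root (X^2 + C x * X + 1 : F[X]) (by
      have : (X^2 + C x * X + 1 : F[X]).degree = 2 := by compute_degree!
      rw [this]; norm_num)
    exact ⟨v, by simpa [Polynomial.IsRoot] using hv⟩
  have hv0 : v ≠ 0 := by rintro rfl; simp at hv
  have hx : x = v + v⁻¹ := by
    field_simp
    linear_combination hv - (v^2+1)*h2
  have h3 : v^3 + (v^3)⁻¹ = d + d⁻¹ := by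
    rw [← h, hx]
    field_simp
    linear_combination (-2*v^4-2*v^2)*h2
  rcases add_inv_inj _ _ (pow_ne_zero 3 hv0) hd h3 with h | h
  · exact ⟨v, h, hx⟩
  · refine ⟨v⁻¹, ?_, by rw [hx, inv_inv, add_comm]⟩
    rw [inv_pow]
    exact (eq_inv_of_mul_eq_one_right h).symm

lemma omega_prim (ω : F) (hω : ω^2 = ω+1) : IsPrimitiveRoot ω 3 := by
  have h2 : (2:F)=0 := aux_two
  have h3 : ω^3 = 1 := by grind
  refine IsPrimitiveRoot.mk_of_lt ω (by norm_num) h3 ?_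
  intro l h0 h1 h
  interval_cases l
  · simp at h; subst h; simp at hω
  · rw [h] at hω; have : ω = 0 := by linear_combination -hω
    subst this; simp at h

lemma orbit [IsAlgClosed F] (m : ℕ) (hm3 : ¬ m % 3 = 0) (ω c : F) (hω : ω^2 = ω+1) (hc0 : c ≠ 0)
    (hc : c ^ ((-2:ℤ)^m) = c) :
    ∃ k : ℕ, k < 3 ∧ ∀ (j : ℕ) (v : F), v^3 = ω^j * c →
      v ^ ((-2:ℤ)^m) = v * ω ^ ((m:ℤ)*(k-j)) := by
  have hp := omega_prim ω hω
  have h3 : ω^3 = 1 := hp.pow_eq_one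
  have hω0 : ω ≠ 0 := by rintro rfl; simp at h3
  obtain ⟨u, hu⟩ := IsAlgClosed.exists_pow_nat_eq ω (n := 3) (by norm_num)
  obtain ⟨w, hw⟩ := IsAlgClosed.exists_pow_nat_eq c (n := 3) (by norm_num)
  have hu0 : u ≠ 0 := by rintro rfl; simp at hu; exact hω0 hu.symm
  have hw0 : w ≠ 0 := by rintro rfl; simp at hw; exact hc0 hw.symm
  obtain ⟨d, hd⟩ := pow_mod_nine m
  have hω3 : ω ^ (3:ℤ) = 1 := by exact_mod_cast h3
  have hu3 : u ^ (3:ℤ) = ω := by exact_mod_cast hu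
  have hsu : u ^ ((-2:ℤ)^m) = u * ω ^ (-(m:ℤ)) := by
    rw [hd, show (1 - 3*(m:ℤ) + 9*d) = 1 + 3*(-m + 3*d) by ring, zpow_add₀ hu0, zpow_mul, hu3,
      zpow_one, zpow_add₀ hω0, zpow_mul, hω3, one_zpow, mul_one]
  have hsω : ω ^ ((-2:ℤ)^m) = ω := by
    rw [hd, show (1 - 3*(m:ℤ) + 9*d) = 1 + 3*(-m + 3*d) by ring, zpow_add₀ hω0, zpow_mul, hω3,
      one_zpow, zpow_one, mul_one]
  obtain ⟨i, hi⟩ : ∃ i : ℕ, w ^ ((-2:ℤ)^m) = w * ω^i := by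
    apply cube_roots ω _ _ hω
    rw [hw, ← zpow_natCast, ← zpow_mul, mul_comm, zpow_mul, zpow_natCast, hw, hc]
  obtain ⟨k, hk, hk'⟩ : ∃ k : ℕ, k < 3 ∧ (3:ℤ) ∣ (m:ℤ)*k - i := by
    have h : m % 3 = 1 ∨ m % 3 = 2 := by omega
    refine ⟨(m * i) % 3, Nat.mod_lt _ (by norm_num), ?_⟩
    apply (Int.modEq_iff_dvd.1 (Int.ModEq.symm _))
    push_cast
    have e1 : (m:ℤ) * (m * i % 3) ≡ m * (m*i) [ZMOD 3] := (Int.mod_modEq _ _).mul_left _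
    refine e1.trans ?_
    have e2 : (m:ℤ)*m ≡ 1 [ZMOD 3] := by
      rcases h with h | h
      · have : (m:ℤ) ≡ 1 [ZMOD 3] := by unfold Int.ModEq; omega
        simpa using this.mul this
      · have : (m:ℤ) ≡ 2 [ZMOD 3] := by unfold Int.ModEq; omega
        exact (this.mul this).trans (by decide)
    simpa [mul_assoc] using e2.mul_right (i:ℤ)
  refine ⟨k, hk, ?_⟩
  intro j v hv
  obtain ⟨r, hr⟩ := cube_roots ω v (w * u^j) hω (by
    rw [hv, mul_pow, hw, ← pow_mul, mul_comm j, pow_mul, hu, mul_comm])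
  have hpow : ∀ (t : F) (n : ℕ), (t^n) ^ ((-2:ℤ)^m) = (t ^ ((-2:ℤ)^m))^n := by
    intro t n
    rw [← zpow_natCast, ← zpow_mul, mul_comm, zpow_mul, zpow_natCast]
  obtain ⟨e, he⟩ := hk'
  have hii : ω ^ i = ω ^ ((m:ℤ)*k) := by
    rw [show (m:ℤ)*k = i + 3*e by linarith, zpow_add₀ hω0, zpow_mul, hω3]; simp
  rw [hr, mul_zpow, mul_zpow, hpow, hpow, hi, hsu, hsω, mul_pow, hii, mul_sub, zpow_sub₀ hω0,
    zpow_neg, zpow_mul ω m j, zpow_natCast, inv_pow]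
  field_simp
  rw [zpow_natCast]

lemma orbit_iter (m k j : ℕ) (ω c : F) (hω : ω^2 = ω+1)
    (H : ∀ v : F, v^3 = ω^j * c → v ^ ((-2:ℤ)^m) = v * ω ^ ((m:ℤ)*(k-j)))
    (v : F) (hv : v^3 = ω^j * c) (n : ℕ) :
    v ^ ((-2:ℤ)^(m*n)) = v * ω ^ ((n:ℤ)*((m:ℤ)*(k-j))) := by
  have hp := omega_prim ω hω
  have h3 : ω^3 = 1 := hp.pow_eq_one
  have hω0 : ω ≠ 0 := by rintro rfl; simp at h3
  have hω3 : ω ^ (3:ℤ) = 1 := by exact_mod_cast h3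
  induction n with
  | zero => simp
  | succ n ih =>
    rw [mul_add, pow_add, zpow_mul, ih, mul_one, H]
    · rw [mul_assoc, ← zpow_add₀ hω0]; congr 2; push_cast; ring
    · rw [mul_pow, hv, ← zpow_natCast (ω ^ _) 3, ← zpow_mul, mul_comm _ (((3:ℕ)):ℤ), zpow_mul]
      push_cast
      rw [hω3]; simp

def al (A : F) (j : ℕ) : F := if j = 0 then 0 else A
def be (b : F) (j : ℕ) : F := if j = 0 then 1 else if j = 1 then b^2 else b^2+1
def HH (A b : F) (j : ℕ) (v : F) : F := (al A j + v + v⁻¹) / be b j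

theorem main_general [IsAlgClosed F]
    (m ℓ : ℕ) (hℓ3 : ¬ 3 ∣ ℓ)
    (a : F) (haq : a ^ 2^m = a) (ha2 : a ^ 2 ≠ a)
    (ω : F) (hω4 : ω ^ 4 = ω) (hω2 : ω ^ 2 ≠ ω)
    (b : F) (hbq : b ^ 2^m = b) (hb : b ^ 2 + b = a⁻¹ + 1)
    (c : F) (hc : c = (b + ω) / (b + ω ^ 2)) (hm3 : ¬ m % 3 = 0) :
    ∃ k : ℕ, k < 3 ∧ (∃ y : F, y ^ (2^m) ^ 2 = y ∧ y ^ 3 = ω ^ k * c) ∧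
      (∀ j : ℕ, j < 3 → (∃ y : F, y ^ (2^m) ^ 2 = y ∧ y ^ 3 = ω ^ j * c) → j = k) ∧
      (∀ j v, v^3 = ω^j * c → v ^ (2^m)^6 = v) ∧
      ∀ x, (x ^ (2^m) ^ 3 = x ∧ x ^ (2 * (2^m) ^ ℓ + 1) + x + a = 0) ↔
        ∃ j < 3, ∃ v, v^3 = ω^j * c ∧ x = HH a⁻¹ b j v ∧ (3:ℤ) ∣ ℓ*(m*(k-j)) - j := by
  haveI : Fact (Nat.Prime 2) := ⟨Nat.prime_two⟩
  have h2 : (2:F)=0 := aux_two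
  have ha0 : a ≠ 0 := by rintro rfl; simp at ha2
  have ha1 : a ≠ 1 := by rintro rfl; simp at ha2
  have hω0 : ω ≠ 0 := by rintro rfl; simp at hω2
  have hω : ω^2 = ω+1 := by
    have : (ω^2-ω)*(ω^2+ω+1) = 0 := by linear_combination hω4
    rcases mul_eq_zero.1 this with h | h
    · exact absurd (sub_eq_zero.1 h) hω2
    · linear_combination h - (ω+1)*h2
  have hp := omega_prim ω hω
  have h3 : ω^3 = 1 := hp.pow_eq_one
  have hω3 : ω ^ (3:ℤ) = 1 := by exact_mod_cast h3
  obtain ⟨A, hAdef⟩ : ∃ A, A = a⁻¹ := ⟨_, rfl⟩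
  rw [← hAdef] at hb ⊢
  have haA : a * A = 1 := by rw [hAdef, mul_inv_cancel₀ ha0]
  have hA0 : A ≠ 0 := by rintro rfl; simp at haA
  have hA : A = b^2+b+1 := by linear_combination -hb -h2
  have hA1 : A ≠ 1 := by rintro rfl; exact ha1 (by simpa using haA)
  have hb0 : b ≠ 0 := by rintro rfl; apply hA1; rw [hA]; simp
  have hb1 : b^2+1 ≠ 0 := by
    intro h
    have h' : (b+1)^2 = 0 := by linear_combination h + b*h2
    have h'' := pow_eq_zero_iff (two_ne_zero) |>.1 h'
    apply hA1; rw [hA]; linear_combination b*h''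
  have hfac : (b+ω)*(b+ω^2) = A := by rw [hA]; grind
  have hbω : b + ω ≠ 0 := by intro h; rw [h] at hfac; simp at hfac; exact hA0 hfac.symm
  have hbω2 : b + ω^2 ≠ 0 := by intro h; rw [h] at hfac; simp at hfac; exact hA0 hfac.symm
  have hc0 : c ≠ 0 := by rw [hc]; exact div_ne_zero hbω hbω2
  have hAc : A*c = (b+ω)^2 := by rw [hc, ← hfac]; field_simp
  have hAc' : A*c⁻¹ = (b+ω^2)^2 := by rw [hc, ← hfac]; field_simp
  have hcc : c + c⁻¹ = a := by
    apply mul_left_cancel₀ hA0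
    rw [mul_add, hAc, hAc', mul_comm A a, haA]; grind
  have hcc1 : ω*c + (ω*c)⁻¹ = a*b^2 := by
    have : (ω*c)⁻¹ = ω^2*c⁻¹ := by field_simp; exact h3.symm
    rw [this]
    apply mul_left_cancel₀ hA0
    exact cc1 a b A ω c _ hA haA hω hAc hAc'
  have hcc2 : ω^2*c + (ω^2*c)⁻¹ = a*(b^2+1) := by
    have : (ω^2*c)⁻¹ = ω*c⁻¹ := by field_simp; exact h3.symm
    rw [this]
    apply mul_left_cancel₀ hA0
    exact cc2 a b A ω c _ hA haA hω hAc hAc'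
  have hsc : c ^ ((-2:ℤ)^m) = c := by
    have hωe : ∀ n : ℕ, (Even n → ω^2^n = ω) ∧ (Odd n → ω^2^n = ω^2) := by
      intro n
      induction n with
      | zero => simp
      | succ n ih =>
        rw [pow_succ, pow_mul]
        refine ⟨fun h => ?_, fun h => ?_⟩
        · rw [ih.2 (by simpa [Nat.even_add_one] using h), ← pow_mul]; exact hω4
        · rw [ih.1 (by simpa [Nat.odd_add_one] using h)]
    rcases Nat.even_or_odd m with h | h
    · rw [h.neg_pow, show ((2:ℤ)^m) = ((2^m:ℕ):ℤ) by push_cast; rfl, zpow_natCast, hc, div_pow,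
        add_pow_char_pow, add_pow_char_pow, hbq, ← pow_mul, mul_comm 2, pow_mul, (hωe m).1 h]
    · rw [h.neg_pow, zpow_neg, show ((2:ℤ)^m) = ((2^m:ℕ):ℤ) by push_cast; rfl, zpow_natCast, hc,
        div_pow, add_pow_char_pow, add_pow_char_pow, hbq, ← pow_mul, mul_comm 2, pow_mul,
        (hωe m).2 h, ← pow_mul, show 2*2 = 4 from rfl, hω4, inv_div]
  obtain ⟨k, hk, hkv⟩ := orbit m hm3 ω c hω hc0 hsc
  have hit := fun j v hv n => orbit_iter m k j ω c hω (hkv j) v hv n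
  have hv0 : ∀ (j : ℕ) (v : F), v^3 = ω^j * c → v ≠ 0 := by
    rintro j v hv rfl
    have : ω^j*c ≠ 0 := mul_ne_zero (pow_ne_zero _ hω0) hc0
    apply this; rw [← hv]; simp
  have heven : ∀ (v : F) (n : ℕ), Even n → v ^ ((-2:ℤ)^(m*n)) = v ^ (2^m)^n := by
    intro v n hn
    rw [(hn.mul_left m).neg_pow, ← pow_mul]
    exact_mod_cast zpow_natCast v (2^(m*n))
  have hm3' : ¬ (3:ℤ) ∣ m := by omega
  have hℓ3' : ¬ (3:ℤ) ∣ ℓ := by omega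
  have p3 : Prime (3:ℤ) := Int.prime_three
  have hcube : ∀ (j : ℕ) (v : F) (e : ℤ), v^3 = ω^j*c → (v*ω^e)^3 = ω^j*c := by
    intro j v e hv
    rw [mul_pow, hv, ← zpow_natCast (ω ^ _) 3, ← zpow_mul, mul_comm e, zpow_mul]
    push_cast
    rw [hω3]; simp
  have hFq : ∀ t : F, t ^ 2^m = t → ∀ n, t ^ 2^(m*n) = t := by
    intro t ht n
    induction n with
    | zero => simp
    | succ n ih => rw [mul_add, pow_add, pow_mul, ih, mul_one, ht]
  have hal : (al A : ℕ → F) = fun j => if j = 0 then 0 else A := rfl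
  have hAq : A^2^m = A := by rw [hAdef, inv_pow, haq]
  have hbe0 : ∀ j, be b j ≠ 0 := by
    intro j; unfold be; split_ifs
    · simp
    · exact pow_ne_zero _ hb0
    · exact hb1
  have halq : ∀ j, (al A j)^2^m = al A j := by
    intro j; unfold al; split_ifs
    · simp
    · exact hAq
  have hbeq : ∀ j, (be b j)^2^m = be b j := by
    intro j; unfold be; split_ifs
    · simp
    · rw [← pow_mul, mul_comm, pow_mul, hbq]
    · rw [add_pow_char_pow, ← pow_mul, mul_comm, pow_mul, hbq, one_pow]
  have hHq : ∀ (j : ℕ) (v : F) (n : ℕ), v^3 = ω^j*c →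
      (HH A b j v)^(2^m)^n = HH A b j (v * ω ^ ((n:ℤ)*((m:ℤ)*(k-j)))) := by
    intro j v n hv
    rw [← hit j v hv n]
    unfold HH
    rw [← pow_mul, div_pow, add_assoc, add_pow_char_pow, sig_add_inv, hFq _ (halq j), hFq _ (hbeq j),
      add_assoc]
  have hdd : ∀ j < 3, ω^j*c + (ω^j*c)⁻¹ = a * be b j := by
    intro j hj
    interval_cases j
    · simpa [be] using hcc
    · simpa [be] using hcc1
    · simpa [be] using hcc2
  have hinj : ∀ j < 3, ∀ v w : F, v^3 = ω^j*c → w^3 = ω^j*c → HH A b j v = HH A b j w → v = w := by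
    intro j hj v w hv hw h
    unfold HH at h
    rw [div_left_inj' (hbe0 j), add_assoc, add_assoc] at h
    rcases add_inv_inj v w (hv0 j v hv) (hv0 j w hw) (add_left_cancel h) with h | h
    · exact h
    · exfalso
      have e : (ω^j*c)*(ω^j*c) = 1 := by
        nth_rewrite 1 [← hv]; rw [← hw, ← mul_pow, h, one_pow]
      have e' := hdd j hj
      rw [inv_eq_of_mul_eq_one_left e, ← two_mul, h2, zero_mul] at e'
      exact mul_ne_zero ha0 (hbe0 j) e'.symm
  have hkey : ∀ j < 3, ∀ v : F, v^3 = ω^j*c →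
      HH A b j v * (HH A b j (v * ω^j) + 1)^2 = a := by
    intro j hj v hv
    have hvv := hv0 j v hv
    have hw : (v⁻¹)^3 = (ω^j)⁻¹ * c⁻¹ := by rw [inv_pow, hv, mul_inv]
    have hinv1 : ω⁻¹ = ω^2 := by field_simp; exact h3.symm
    have hinv2 : (ω^2)⁻¹ = ω := by field_simp; exact h3.symm
    have hvw : v * v⁻¹ = 1 := mul_inv_cancel₀ hvv
    interval_cases j
    · simp only [pow_zero, one_mul, inv_one, mul_one] at hv hw ⊢
      simp only [HH, al, be, if_true, div_one, zero_add]
      have hw' := hw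
      rw [← hcc, ← hw', ← hv]
      exact key0_s4 _ _ hvw
    · simp only [pow_one] at hv hw ⊢
      rw [hinv1] at hw
      have := key1_s4 a b A ω c c⁻¹ v v⁻¹ hA haA hω hvw hv hw hAc hcc
      simp only [HH, al, be, if_true, one_ne_zero, if_false]
      rw [mul_inv, hinv1]
      generalize v⁻¹ = w at *
      field_simp
      linear_combination this
    · rw [hinv2] at hw
      have := key2_s4 a b A ω c c⁻¹ v v⁻¹ hA haA hω hvw hv hw hAc hcc
      simp only [HH, al, be, two_ne_zero, if_false, show ¬ (2 = 1) by norm_num]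
      rw [mul_inv, hinv2]
      generalize v⁻¹ = w at *
      field_simp
      linear_combination this
  have hωper : ∀ e f : ℤ, (3:ℤ) ∣ e - f ↔ ω^e = ω^f := by
    intro e f
    rw [← div_eq_one_iff_eq (zpow_ne_zero _ hω0), ← zpow_sub₀ hω0, hp.zpow_eq_one_iff_dvd]
    norm_cast
  have hback : ∀ j < 3, ∀ v : F, v^3 = ω^j*c →
      ((HH A b j v)^(2 * (2^m) ^ ℓ + 1) + HH A b j v + a = 0 ↔ (3:ℤ) ∣ ℓ*(m*(k-j)) - j) := by
    intro j hj v hv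
    have hK := hkey j hj v hv
    have hne : HH A b j v ≠ 0 := by intro h; rw [h, zero_mul] at hK; exact ha0 hK.symm
    have hc2 := hcube j v (ℓ*(m*(k-j))) hv
    have hc3 := hcube j v j hv
    rw [hωper, pow_succ, mul_comm 2, pow_mul, hHq j v ℓ hv]
    rw [zpow_natCast] at hc3 ⊢
    constructor
    · intro h
      have e1 : HH A b j v * (HH A b j (v * ω ^ ((ℓ:ℤ)*((m:ℤ)*(k-j)))) + 1)^2 = a := eq_form1 _ _ _ h
      have e2 := mul_left_cancel₀ hne (e1.trans hK.symm)
      have e3 : HH A b j (v * ω ^ ((ℓ:ℤ)*((m:ℤ)*(k-j)))) = HH A b j (v * ω^j) := sq_inj _ _ e2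
      exact mul_left_cancel₀ (hv0 j v hv) (hinj j hj _ _ hc2 hc3 e3)
    · intro h
      rw [h]
      exact eq_form2 _ _ _ hK
  refine ⟨k, hk, ?_, ?_, ?_, ?_⟩
  · obtain ⟨y, hy⟩ := IsAlgClosed.exists_pow_nat_eq (ω^k*c) (n := 3) (by norm_num)
    refine ⟨y, ?_, hy⟩
    rw [← heven y 2 (by decide), hit k y hy]; simp
  · rintro j hj ⟨y, hy2, hy3⟩
    rw [← heven y 2 (by decide), hit j y hy3, mul_eq_left₀ (hv0 j y hy3), hp.zpow_eq_one_iff_dvd] at hy2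
    have h1 := (p3.dvd_or_dvd hy2).resolve_left (by norm_num)
    have h1 := (p3.dvd_or_dvd h1).resolve_left hm3'
    omega
  · intro j v hv
    rw [← heven v 6 (by decide), hit j v hv, show (((6:ℕ):ℤ)*((m:ℤ)*(k-j))) = 3*(2*(m*(k-j))) by push_cast; ring,
      zpow_mul, hω3]; simp
  · intro x
    constructor
    · rintro ⟨hx3, hx⟩
      suffices h : ∃ j < 3, ∃ v, v^3 = ω^j*c ∧ x = HH A b j v by
        obtain ⟨j, hj, v, hv, rfl⟩ := h
        exact ⟨j, hj, v, hv, rfl, (hback j hj v hv).1 hx⟩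
      obtain ⟨y, hy⟩ : ∃ y, y = x ^ (2^m)^ℓ := ⟨_, rfl⟩
      obtain ⟨z, hz⟩ : ∃ z, z = y ^ (2^m)^ℓ := ⟨_, rfl⟩
      have hzx : z ^ (2^m)^ℓ = x := by
        rw [hz, hy, ← pow_mul, ← pow_mul]
        have : ∀ n, x ^ ((2^m)^3)^n = x := by
          intro n
          induction n with
          | zero => simp
          | succ n ih => rw [pow_succ, pow_mul, ih, hx3]
        refine Eq.trans ?_ (this ℓ)
        congr 1
        ring
      have haQ : a ^ (2^m)^ℓ = a := by rw [← pow_mul]; exact hFq a haq ℓ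
      have E3 : x*(y+1)^2 = a := by
        rw [pow_succ, mul_comm 2, pow_mul, ← hy] at hx; exact eq_form1 _ _ _ hx
      have hfr : ∀ s t : F, (s*(t+1)^2)^(2^m)^ℓ = s^(2^m)^ℓ * (t^(2^m)^ℓ+1)^2 := by
        intro s t
        rw [mul_pow, ← pow_mul 2 m ℓ, pow_right_comm, add_pow_char_pow, one_pow]
      have E2 : y*(z+1)^2 = a := by
        rw [← haQ, ← E3, hfr, ← hy, ← hz]
      have E1 : z*(x+1)^2 = a := by
        rw [← haQ, ← E2, hfr, ← hz, hzx]
      have hN : x*A*(A*(x+1)^4+(1+A*(x+1)^2)^2)^2+(1+A*(x+1)^2)^4 = 0 := by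
        have f1 : A*(x+1)^2*z = 1 := by linear_combination A*E1 + haA
        have f2 : A*(z+1)^2*y = 1 := by linear_combination A*E2 + haA
        have f3 : A*(y+1)^2*x = 1 := by linear_combination A*E3 + haA
        have g1 : 1+A*(x+1)^2 = A*(x+1)^2*(z+1) := by linear_combination -f1
        have g2 : A*(x+1)^4 = y*(1+A*(x+1)^2)^2 := by
          rw [g1]; linear_combination (-A*(x+1)^4)*f2
        rw [g2]
        linear_combination ((1+A*(x+1)^2)^4)*f3 + (1+A*(x+1)^2)^4*h2
      have hP := nonic_factor x b A hA
      rw [hN, mul_zero] at hP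
      have hgen : ∀ j < 3, (be b j * x + al A j)^3 + (be b j * x + al A j) = a * be b j →
          ∃ j < 3, ∃ v, v^3 = ω^j*c ∧ x = HH A b j v := by
        intro j hj h
        rw [← hdd j hj] at h
        obtain ⟨v, hv, hxv⟩ := exists_add_inv _ _ (mul_ne_zero (pow_ne_zero _ hω0) hc0) h
        refine ⟨j, hj, v, hv, ?_⟩
        unfold HH
        rw [eq_div_iff (hbe0 j), add_assoc, ← hxv]
        linear_combination -al A j * h2
      rcases mul_eq_zero.1 hP with hP | hP
      · rcases mul_eq_zero.1 hP with hP | hP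
        · apply hgen 0 (by norm_num)
          simp only [be, al, if_true]
          apply mul_left_cancel₀ hA0
          linear_combination hP - haA - h2
        · apply hgen 1 (by norm_num)
          simp only [be, al, if_true, one_ne_zero, if_false]
          apply mul_left_cancel₀ hA0
          linear_combination hP - b^2*haA - b^2*h2
      · apply hgen 2 (by norm_num)
        simp only [be, al, two_ne_zero, if_false, show ¬ (2 = 1) by norm_num]
        apply mul_left_cancel₀ hA0
        linear_combination hP - (b^2+1)*haA - (b^2+1)*h2
    · rintro ⟨j, hj, v, hv, rfl, hd⟩
      refine ⟨?_, (hback j hj v hv).2 hd⟩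
      rw [hHq j v 3 hv]
      push_cast
      rw [zpow_mul, hω3]; simp

end helpers

open Polynomial

local notation "K" => AlgebraicClosure (ZMod 2)

theorem roots_description_m_not_div_three
    (m ℓ : ℕ) (hm : 0 < m) (hℓ : 0 < ℓ) (hℓ3 : ¬ 3 ∣ ℓ)
    (q : ℕ) (hq : q = 2 ^ m)
    (a : K) (haq : a ^ q = a) (ha2 : a ^ 2 ≠ a)
    (htr : ∑ i ∈ Finset.range m, a⁻¹ ^ 2 ^ i = (m : K))
    (ω : K) (hω4 : ω ^ 4 = ω) (hω2 : ω ^ 2 ≠ ω)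
    (b : K) (hbq : b ^ q = b) (hb : b ^ 2 + b = a⁻¹ + 1)
    (c : K) (hc : c = (b + ω) / (b + ω ^ 2))
    (Γ : Set K)
    (hΓ : Γ = {x : K | x ^ q ^ 3 = x ∧ x ^ (2 * q ^ ℓ + 1) + x + a = 0})
    (Λ0 Λ1 Λ2 : Set K)
    (hΛ0 : Λ0 = {x : K | ∃ v : K, v ^ q ^ 6 = v ∧ v ^ 3 = c ∧ x = v + v⁻¹})
    (hΛ1 : Λ1 = {x : K | ∃ v : K, v ^ q ^ 6 = v ∧ v ^ 3 = ω * c ∧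
      x = (a⁻¹ + v + v⁻¹) / b ^ 2})
    (hΛ2 : Λ2 = {x : K | ∃ v : K, v ^ q ^ 6 = v ∧ v ^ 3 = ω ^ 2 * c ∧
      x = (a⁻¹ + v + v⁻¹) / (b ^ 2 + 1)})
    (hm3 : ¬ m % 3 = 0) :
    ∃ k : ℕ, k < 3 ∧ (∃ y : K, y ^ q ^ 2 = y ∧ y ^ 3 = ω ^ k * c) ∧
      (∀ j : ℕ, j < 3 → (∃ y : K, y ^ q ^ 2 = y ∧ y ^ 3 = ω ^ j * c) → j = k) ∧
      (k = 0 → ℓ % 3 = m % 3 → Γ = Λ0) ∧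
      (k ≠ 0 → ℓ % 3 = m % 3 → Γ = (if k = 1 then Λ2 else Λ1)) ∧
      (k = 0 → (ℓ + m) % 3 = 0 → Γ = Λ0 ∪ Λ1 ∪ Λ2) ∧
      (k ≠ 0 → (ℓ + m) % 3 = 0 → Γ = ∅) := by
  haveI : CharP K 2 := inferInstance
  subst hq
  obtain ⟨k, hk, hex, huniq, h6, hG⟩ :=
    main_general m ℓ hℓ3 a haq ha2 ω hω4 hω2 b hbq hb c hc hm3
  have hL0 : ∀ x, x ∈ Λ0 ↔ ∃ v, v^3 = ω^0*c ∧ x = HH a⁻¹ b 0 v := by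
    intro x; rw [hΛ0]
    constructor
    · rintro ⟨v, -, h, h'⟩; exact ⟨v, by simpa using h, by simpa [HH, al, be] using h'⟩
    · rintro ⟨v, h, h'⟩; exact ⟨v, h6 0 v h, by simpa using h, by simpa [HH, al, be] using h'⟩
  have hL1 : ∀ x, x ∈ Λ1 ↔ ∃ v, v^3 = ω^1*c ∧ x = HH a⁻¹ b 1 v := by
    intro x; rw [hΛ1]
    constructor
    · rintro ⟨v, -, h, h'⟩; exact ⟨v, by simpa using h, by simpa [HH, al, be] using h'⟩
    · rintro ⟨v, h, h'⟩; exact ⟨v, h6 1 v h, by simpa using h, by simpa [HH, al, be] using h'⟩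
  have hL2 : ∀ x, x ∈ Λ2 ↔ ∃ v, v^3 = ω^2*c ∧ x = HH a⁻¹ b 2 v := by
    intro x; rw [hΛ2]
    constructor
    · rintro ⟨v, -, h, h'⟩; exact ⟨v, by simpa using h, by simpa [HH, al, be] using h'⟩
    · rintro ⟨v, h, h'⟩; exact ⟨v, h6 2 v h, by simpa using h, by simpa [HH, al, be] using h'⟩
  have hGG : ∀ x, x ∈ Γ ↔ (x ∈ Λ0 ∧ (3:ℤ) ∣ ℓ*(m*(k-(0:ℕ))) - (0:ℕ)) ∨
      (x ∈ Λ1 ∧ (3:ℤ) ∣ ℓ*(m*(k-(1:ℕ))) - (1:ℕ)) ∨ (x ∈ Λ2 ∧ (3:ℤ) ∣ ℓ*(m*(k-(2:ℕ))) - (2:ℕ)) := by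
    intro x
    rw [hΓ, hL0, hL1, hL2]
    refine (hG x).trans ?_
    constructor
    · rintro ⟨j, hj, v, h1, h2, h3⟩
      interval_cases j
      · exact Or.inl ⟨⟨v, h1, h2⟩, h3⟩
      · exact Or.inr (Or.inl ⟨⟨v, h1, h2⟩, h3⟩)
      · exact Or.inr (Or.inr ⟨⟨v, h1, h2⟩, h3⟩)
    · rintro (⟨⟨v, h1, h2⟩, h3⟩ | ⟨⟨v, h1, h2⟩, h3⟩ | ⟨⟨v, h1, h2⟩, h3⟩)
      · exact ⟨0, by norm_num, v, h1, h2, h3⟩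
      · exact ⟨1, by norm_num, v, h1, h2, h3⟩
      · exact ⟨2, by norm_num, v, h1, h2, h3⟩
  have hsame : ℓ % 3 = m % 3 → ∃ t : ℤ, (ℓ:ℤ) * m = 3*t+1 := by
    intro h
    have h' : m % 3 = 1 ∨ m % 3 = 2 := by omega
    rcases h' with h' | h'
    · obtain ⟨r, hr⟩ : ∃ r : ℤ, (m:ℤ) = 3*r+1 := ⟨m/3, by omega⟩
      obtain ⟨s, hs⟩ : ∃ r : ℤ, (ℓ:ℤ) = 3*r+1 := ⟨ℓ/3, by omega⟩
      exact ⟨3*r*s+r+s, by rw [hr, hs]; ring⟩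
    · obtain ⟨r, hr⟩ : ∃ r : ℤ, (m:ℤ) = 3*r+2 := ⟨m/3, by omega⟩
      obtain ⟨s, hs⟩ : ∃ r : ℤ, (ℓ:ℤ) = 3*r+2 := ⟨ℓ/3, by omega⟩
      exact ⟨3*r*s+2*r+2*s+1, by rw [hr, hs]; ring⟩
  have hopp : (ℓ + m) % 3 = 0 → ∃ t : ℤ, (ℓ:ℤ) * m = 3*t+2 := by
    intro h
    have h' : m % 3 = 1 ∨ m % 3 = 2 := by omega
    rcases h' with h' | h'
    · obtain ⟨r, hr⟩ : ∃ r : ℤ, (m:ℤ) = 3*r+1 := ⟨m/3, by omega⟩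
      obtain ⟨s, hs⟩ : ∃ r : ℤ, (ℓ:ℤ) = 3*r+2 := ⟨ℓ/3, by omega⟩
      exact ⟨3*r*s+2*r+s, by rw [hr, hs]; ring⟩
    · obtain ⟨r, hr⟩ : ∃ r : ℤ, (m:ℤ) = 3*r+2 := ⟨m/3, by omega⟩
      obtain ⟨s, hs⟩ : ∃ r : ℤ, (ℓ:ℤ) = 3*r+1 := ⟨ℓ/3, by omega⟩
      exact ⟨3*r*s+r+2*s, by rw [hr, hs]; ring⟩
  refine ⟨k, hk, hex, huniq, ?_, ?_, ?_, ?_⟩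
  · intro hk0 h
    obtain ⟨t, ht⟩ := hsame h
    ext x
    rw [hGG x]
    simp only [← mul_assoc, ht]
    subst hk0
    have e0 : (3:ℤ) ∣ (3*t+1) * (((0:ℕ):ℤ) - ((0:ℕ):ℤ)) - ((0:ℕ):ℤ) := by omega
    have e1 : ¬ (3:ℤ) ∣ (3*t+1) * (((0:ℕ):ℤ) - ((1:ℕ):ℤ)) - ((1:ℕ):ℤ) := by omega
    have e2 : ¬ (3:ℤ) ∣ (3*t+1) * (((0:ℕ):ℤ) - ((2:ℕ):ℤ)) - ((2:ℕ):ℤ) := by omega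
    simp only [e0, e1, e2, and_true, and_false, or_false, false_or, or_assoc, not_false_eq_true]
  · intro hk0 h
    obtain ⟨t, ht⟩ := hsame h
    ext x
    rw [hGG x]
    simp only [← mul_assoc, ht]
    have hk' : k = 1 ∨ k = 2 := by omega
    rcases hk' with rfl | rfl
    · have e0 : ¬ (3:ℤ) ∣ (3*t+1) * (((1:ℕ):ℤ) - ((0:ℕ):ℤ)) - ((0:ℕ):ℤ) := by omega
      have e1 : ¬ (3:ℤ) ∣ (3*t+1) * (((1:ℕ):ℤ) - ((1:ℕ):ℤ)) - ((1:ℕ):ℤ) := by omega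
      have e2 : (3:ℤ) ∣ (3*t+1) * (((1:ℕ):ℤ) - ((2:ℕ):ℤ)) - ((2:ℕ):ℤ) := by omega
      rw [if_pos rfl]
      simp only [e0, e1, e2, and_true, and_false, or_false, false_or, or_assoc, not_false_eq_true]
    · have e0 : ¬ (3:ℤ) ∣ (3*t+1) * (((2:ℕ):ℤ) - ((0:ℕ):ℤ)) - ((0:ℕ):ℤ) := by omega
      have e1 : (3:ℤ) ∣ (3*t+1) * (((2:ℕ):ℤ) - ((1:ℕ):ℤ)) - ((1:ℕ):ℤ) := by omega
      have e2 : ¬ (3:ℤ) ∣ (3*t+1) * (((2:ℕ):ℤ) - ((2:ℕ):ℤ)) - ((2:ℕ):ℤ) := by omega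
      rw [if_neg (by norm_num)]
      simp only [e0, e1, e2, and_true, and_false, or_false, false_or, or_assoc, not_false_eq_true]
  · intro hk0 h
    obtain ⟨t, ht⟩ := hopp h
    ext x
    rw [hGG x, Set.mem_union, Set.mem_union]
    simp only [← mul_assoc, ht]
    subst hk0
    have e0 : (3:ℤ) ∣ (3*t+2) * (((0:ℕ):ℤ) - ((0:ℕ):ℤ)) - ((0:ℕ):ℤ) := by omega
    have e1 : (3:ℤ) ∣ (3*t+2) * (((0:ℕ):ℤ) - ((1:ℕ):ℤ)) - ((1:ℕ):ℤ) := by omega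
    have e2 : (3:ℤ) ∣ (3*t+2) * (((0:ℕ):ℤ) - ((2:ℕ):ℤ)) - ((2:ℕ):ℤ) := by omega
    simp only [e0, e1, e2, and_true, and_false, or_false, false_or, or_assoc, not_false_eq_true]
  · intro hk0 h
    obtain ⟨t, ht⟩ := hopp h
    ext x
    rw [hGG x, Set.mem_empty_iff_false]
    simp only [← mul_assoc, ht]
    have e0 : ¬ (3:ℤ) ∣ (3*t+2) * ((k:ℤ) - ((0:ℕ):ℤ)) - ((0:ℕ):ℤ) := by
      interval_cases k <;> omega
    have e1 : ¬ (3:ℤ) ∣ (3*t+2) * ((k:ℤ) - ((1:ℕ):ℤ)) - ((1:ℕ):ℤ) := by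
      interval_cases k <;> omega
    have e2 : ¬ (3:ℤ) ∣ (3*t+2) * ((k:ℤ) - ((2:ℕ):ℤ)) - ((2:ℕ):ℤ) := by
      interval_cases k <;> omega
    simp only [e0, e1, e2, and_true, and_false, or_false, false_or, or_assoc, not_false_eq_true]
end

section
/- The polynomial X^(2q²+1) + hX + e has exactly three roots in F_{q³}. -/
open Polynomial

local notation "K" => AlgebraicClosure (ZMod 2)

section helpers

variable {F : Type*} [Field F]

/-- The solution set, written with the Frobenius `σ`. -/
def SolSet (σ : F →+* F) (h e : F) : Set F :=
  {x : F | σ (σ (σ x)) = x ∧ σ (σ x) ^ 2 * x + h * x + e = 0}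

lemma add_eq_zero_char2 (h2 : (2 : F) = 0) {x y : F} : x + y = 0 ↔ x = y := by
  constructor <;> intro h <;> grind

lemma chain (h2 : (2 : F) = 0) (σ : F →+* F) {h e x : F} (hh : σ h = h) (he : σ e = e)
    (hx : x ∈ SolSet σ h e) : σ x * (x ^ 2 + h) = e := by
  obtain ⟨h3, hx⟩ := hx
  have := congrArg σ hx
  simp only [map_add, map_mul, map_pow, map_zero, hh, he, h3] at this
  grind

lemma chain_back (h2 : (2 : F) = 0) (σ : F →+* F) {h e x : F} (hh : σ h = h) (he : σ e = e)
    (h3 : σ (σ (σ x)) = x) (hx : σ x * (x ^ 2 + h) = e) : x ∈ SolSet σ h e := by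
  refine ⟨h3, ?_⟩
  have h4 := congrArg σ (congrArg σ hx)
  simp only [map_add, map_mul, map_pow, hh, he, h3] at h4
  grind

/-- The split case. -/
lemma case_one (h2 : (2 : F) = 0) (σ : F →+* F) {h e a b : F} (hh : σ h = h) (he : σ e = e)
    (hab : h = a ^ 2 + a * b + b ^ 2) (heab : e = a * b * (a + b)) (he0 : e ≠ 0)
    (ha : σ a = a) (hb : σ b = b)
    (hσ : ∀ u : F, u ^ 8 = u → σ u = u ∨ σ u = u ^ 4) :
    SolSet σ h e = {a, b, a + b} := by
  have ha0 : a ≠ 0 := by rintro rfl; simp at heab; exact he0 heab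
  have hb0 : b ≠ 0 := by rintro rfl; simp at heab; exact he0 heab
  ext x
  simp only [Set.mem_insert_iff, Set.mem_singleton_iff]
  constructor
  · intro hx
    have hy := chain h2 σ hh he hx
    have h3 := hx.1
    by_cases hxb : x = b
    · exact Or.inr (Or.inl hxb)
    have hxb' : x + b ≠ 0 := fun h => hxb ((add_eq_zero_char2 h2).1 h)
    have hD : x ^ 2 + h ≠ 0 := by intro h0; rw [h0, mul_zero] at hy; exact he0 hy.symm
    have h5 : (σ x + a) * (x ^ 2 + h) = a * (x + a) ^ 2 := by grind
    have h6 : (σ x + b) * (x ^ 2 + h) = b * (x + b) ^ 2 := by grind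
    have hyb : σ x + b ≠ 0 := by
      intro h0; rw [h0, zero_mul] at h6
      exact (mul_ne_zero hb0 (pow_ne_zero 2 hxb')) h6.symm
    set u := a * (x + a) / (b * (x + b)) with hu
    have hu1 : σ u = u ^ 2 := by
      rw [hu]
      simp only [map_div₀, map_mul, map_add, ha, hb]
      rw [div_pow, div_eq_div_iff (mul_ne_zero hb0 hyb) (pow_ne_zero 2 (mul_ne_zero hb0 hxb'))]
      apply mul_right_cancel₀ hD
      linear_combination (a * b ^ 2 * (x + b) ^ 2) * h5 - (a ^ 2 * b * (x + a) ^ 2) * h6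
    have hu3 : σ (σ (σ u)) = u := by
      rw [hu]
      simp only [map_div₀, map_mul, map_add, ha, hb, h3]
    have hu8 : u ^ 8 = u := by
      rw [hu1, map_pow, hu1, map_pow, map_pow, hu1] at hu3
      calc u ^ 8 = ((u ^ 2) ^ 2) ^ 2 := by ring
        _ = u := hu3
    have hu2 : u ^ 2 = u := by
      rcases hσ u hu8 with h7 | h7
      · rw [← hu1, h7]
      · rw [hu1] at h7
        calc u ^ 2 = u ^ 4 := h7
          _ = (u ^ 2) ^ 2 := by ring
          _ = (u ^ 4) ^ 2 := by rw [h7]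
          _ = u ^ 8 := by ring
          _ = u := hu8
    have : u * (u + 1) = 0 := by linear_combination hu2 + u * h2
    rcases mul_eq_zero.1 this with h7 | h7
    · left
      rw [hu, div_eq_zero_iff] at h7
      rcases h7 with h7 | h7
      · exact (add_eq_zero_char2 h2).1 ((mul_eq_zero.1 h7).resolve_left ha0)
      · exact absurd h7 (mul_ne_zero hb0 hxb')
    · right; right
      have h8 := (add_eq_zero_char2 h2).1 h7
      rw [hu, div_eq_one_iff_eq (mul_ne_zero hb0 hxb')] at h8
      have hc : a + b ≠ 0 := by intro h0; rw [h0, mul_zero] at heab; exact he0 heab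
      apply mul_left_cancel₀ hc
      grind
  · rintro (rfl | rfl | rfl)
    · refine chain_back h2 σ hh he (by simp [ha]) ?_
      rw [ha]; grind
    · refine chain_back h2 σ hh he (by simp [hb]) ?_
      rw [hb]; grind
    · refine chain_back h2 σ hh he (by simp [ha, hb]) ?_
      rw [map_add, ha, hb]; grind

/-- The cyclic case. -/
lemma case_two (h2 : (2 : F) = 0) (σ : F →+* F) {h e a b : F} (hh : σ h = h) (he : σ e = e)
    (hab : h = a ^ 2 + a * b + b ^ 2) (heab : e = a * b * (a + b)) (he0 : e ≠ 0)
    (hhe : h ^ 3 + e ^ 2 ≠ 0)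
    (ha : σ a = b) (hb : σ b = a + b)
    (hσ : ∀ u : F, u ^ 8 = u → σ (σ (σ u)) = u) :
    (SolSet σ h e).ncard = {u : F | u ^ 8 = u ∧ σ u * (u + 1) ^ 2 = 1}.ncard := by
  have ha0 : a ≠ 0 := by rintro rfl; simp at heab; exact he0 heab
  have hb0 : b ≠ 0 := by rintro rfl; simp at heab; exact he0 heab
  have hc : a + b ≠ 0 := by intro h0; rw [h0, mul_zero] at heab; exact he0 heab
  have hfac : h ^ 3 + e ^ 2 = (a ^ 3 + a ^ 2 * b + b ^ 3) * (a ^ 3 + a * b ^ 2 + b ^ 3) := by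
    rw [hab, heab]; grind
  have hab3 : σ (a + b) = a := by rw [map_add, ha, hb]; grind
  have hden : ∀ u : F, u ^ 8 = u ∧ σ u * (u + 1) ^ 2 = 1 → a + u * b ≠ 0 := by
    rintro u ⟨hu8, hu⟩ h0
    have h1 : u + 1 ≠ 0 := by intro h1; rw [h1] at hu; simp at hu
    have hu0 : u ≠ 0 := by rintro rfl; simp at hu
    have h7 : (u ^ 3 + u ^ 2 + 1) * (u ^ 3 + u + 1) = 0 := by
      apply mul_left_cancel₀ (mul_ne_zero hu0 h1)
      clear * - hu8 h2
      grind
    have hau : a = u * b := (add_eq_zero_char2 h2).1 h0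
    apply hhe
    rw [hfac, hau]
    linear_combination b ^ 6 * h7
  have key : SolSet σ h e =
      (fun u => (a ^ 2 + u * b ^ 2) / (a + u * b)) ''
        {u : F | u ^ 8 = u ∧ σ u * (u + 1) ^ 2 = 1} := by
    ext x
    constructor
    · intro hx
      have hy := chain h2 σ hh he hx
      have h3 := hx.1
      have hD : x ^ 2 + h ≠ 0 := by intro h0; rw [h0, mul_zero] at hy; exact he0 hy.symm
      have h5 : (σ x + b) * (x ^ 2 + h) = b * (x + b) ^ 2 := by grind
      have h6 : (σ x + (a + b)) * (x ^ 2 + h) = (a + b) * (x + (a + b)) ^ 2 := by grind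
      have hxb' : x + b ≠ 0 := by
        intro h0
        have hxb := (add_eq_zero_char2 h2).1 h0
        subst hxb
        rw [hb] at hy h5
        have h9 : a * (x ^ 2 + h) = 0 := by grind
        exact mul_ne_zero ha0 hD h9
      have hxc' : x + (a + b) ≠ 0 := by
        intro h0
        have hxc := (add_eq_zero_char2 h2).1 h0
        have hsx : σ x = a := by rw [hxc, hab3]
        rw [h0, hsx] at h6
        have h9 : b * (x ^ 2 + h) = 0 := by
          clear * - h6 h2
          grind
        exact mul_ne_zero hb0 hD h9
      have hyc : σ x + (a + b) ≠ 0 := by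
        intro h0; rw [h0, zero_mul] at h6
        exact (mul_ne_zero hc (pow_ne_zero 2 hxc')) h6.symm
      obtain ⟨u, hu⟩ : ∃ u, u = a * (x + a) / (b * (x + b)) := ⟨_, rfl⟩
      have hub : u * (b * (x + b)) = a * (x + a) := by
        rw [hu, div_mul_cancel₀ _ (mul_ne_zero hb0 hxb')]
      have hub1 : (u + 1) * (b * (x + b)) = (a + b) * (x + (a + b)) := by grind
      have hub2 : σ u * ((a + b) * (σ x + (a + b))) = b * (σ x + b) := by
        have := congrArg σ hub
        simp only [map_mul, map_add, ha, hb] at this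
        grind
      have hu1 : σ u * (u + 1) ^ 2 = 1 := by
        have h7 : σ u * ((a + b) * (x + (a + b))) ^ 2 = (b * (x + b)) ^ 2 := by
          linear_combination (x ^ 2 + h) * hub2 + b * h5 - σ u * (a + b) * h6
        rw [← hub1] at h7
        apply mul_right_cancel₀ (pow_ne_zero 2 (mul_ne_zero hb0 hxb'))
        linear_combination h7
      have hu3 : σ (σ (σ u)) = u := by
        have e1 : σ (σ (σ a)) = a := by rw [ha, hb, hab3]
        have e2 : σ (σ (σ b)) = b := by rw [hb, hab3, ha]
        rw [hu]
        simp only [map_div₀, map_mul, map_add] at e1 e2 ⊢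
        rw [e1, e2, h3]
      have hu2 := congrArg σ hu1
      have hu4 := congrArg σ hu2
      simp only [map_mul, map_add, map_pow, map_one, hu3] at hu2 hu4
      have hu8 : u ^ 8 = u := by
        generalize σ (σ u) = u2 at *
        generalize σ u = u1 at *
        have g1 : (u1 + 1) * (u + 1) ^ 2 = u ^ 2 := by grind
        have g2 : u2 * u ^ 4 = (u + 1) ^ 4 := by
          linear_combination (u + 1) ^ 4 * hu2 -
            u2 * ((u1 + 1) * (u + 1) ^ 2 + u ^ 2) * g1
        have g3 : (u2 + 1) * u ^ 4 = 1 := by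
          clear * - g2 h2
          grind
        linear_combination u * ((u2 + 1) * u ^ 4 + 1) * g3 - u ^ 8 * hu4
      refine ⟨u, ⟨hu8, hu1⟩, ?_⟩
      change (a ^ 2 + u * b ^ 2) / (a + u * b) = x
      rw [div_eq_iff (hden u ⟨hu8, hu1⟩)]
      grind
    · rintro ⟨u, ⟨hu8, hu1⟩, rfl⟩
      have hd := hden u ⟨hu8, hu1⟩
      have hu3 := hσ u hu8
      obtain ⟨x, hx⟩ : ∃ x, x = (a ^ 2 + u * b ^ 2) / (a + u * b) := ⟨_, rfl⟩
      change (a ^ 2 + u * b ^ 2) / (a + u * b) ∈ _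
      rw [← hx]
      have hxd : x * (a + u * b) = a ^ 2 + u * b ^ 2 := by rw [hx, div_mul_cancel₀ _ hd]
      have e1 : σ (σ (σ a)) = a := by rw [ha, hb, hab3]
      have e2 : σ (σ (σ b)) = b := by rw [hb, hab3, ha]
      refine chain_back h2 σ hh he ?_ ?_
      · rw [hx]
        simp only [map_div₀, map_mul, map_add, map_pow] at e1 e2 hu3 ⊢
        rw [e1, e2, hu3]
      · have h7 := congrArg σ hxd
        simp only [map_mul, map_add, map_pow, ha, hb] at h7
        have hd' : b + σ u * (a + b) ≠ 0 := by
          intro h0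
          apply hd
          apply σ.injective
          simp only [map_mul, map_add, ha, hb, map_zero, h0]
        have hs : (b + σ u * (a + b)) * (u + 1) ^ 2 = a + u ^ 2 * b := by
          linear_combination (a + b) * hu1 + (b + b * u) * h2
        have hs2 : (b ^ 2 + σ u * (a + b) ^ 2) * (u + 1) ^ 2 = a ^ 2 + u ^ 2 * b ^ 2 := by
          linear_combination (a + b) ^ 2 * hu1 + (b ^ 2 + a * b + b ^ 2 * u) * h2
        have hy : σ x * (a + u ^ 2 * b) = a ^ 2 + u ^ 2 * b ^ 2 := by
          rw [← hs, ← hs2, ← h7]; ring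
        have hx3 : x ^ 2 * (a + u * b) ^ 2 = (a ^ 2 + u * b ^ 2) ^ 2 := by rw [← hxd]; ring
        have hu1' : u + 1 ≠ 0 := by intro h1; rw [h1] at hu1; simp at hu1
        have hs0 : a + u ^ 2 * b ≠ 0 := by
          rw [← hs]; exact mul_ne_zero hd' (pow_ne_zero 2 hu1')
        apply mul_right_cancel₀ (mul_ne_zero hs0 (pow_ne_zero 2 hd))
        have : σ x * (x ^ 2 + h) * ((a + u ^ 2 * b) * (a + u * b) ^ 2)
          = (a ^ 2 + u ^ 2 * b ^ 2) * ((a ^ 2 + u * b ^ 2) ^ 2 + h * (a + u * b) ^ 2) := by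
          rw [← hy, ← hx3]; ring
        rw [this, hab, heab]
        clear * - h2
        grind
  rw [key, Set.ncard_image_of_injOn]
  intro u hu v hv huv
  have h1 := hden u hu
  have h3 := hden v hv
  change (a ^ 2 + u * b ^ 2) / (a + u * b) = (a ^ 2 + v * b ^ 2) / (a + v * b) at huv
  rw [div_eq_div_iff h1 h3] at huv
  apply mul_left_cancel₀ he0
  rw [heab]
  grind

lemma count_one (h2 : (2 : F) = 0) {w : F} (hw : w ^ 3 = w + 1) :
    {u : F | u ^ 3 + u + 1 = 0}.ncard = 3 := by
  have hw0 : w ≠ 0 := by rintro rfl; simp at hw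
  have hw1 : w + 1 ≠ 0 := by
    intro h; rw [h] at hw; exact hw0 (pow_eq_zero_iff (by norm_num) |>.1 hw)
  have : {u : F | u ^ 3 + u + 1 = 0} = {w, w ^ 2, w ^ 2 + w} := by
    ext u
    simp only [Set.mem_setOf_eq, Set.mem_insert_iff, Set.mem_singleton_iff]
    have hf : u ^ 3 + u + 1 = (u + w) * ((u + w ^ 2) * (u + (w ^ 2 + w))) := by grind
    rw [hf, mul_eq_zero, mul_eq_zero, add_eq_zero_char2 h2, add_eq_zero_char2 h2,
      add_eq_zero_char2 h2]
  rw [this, Set.ncard_eq_three]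
  refine ⟨_, _, _, ?_, ?_, ?_, rfl⟩
  · intro h; apply mul_ne_zero hw0 hw1; grind
  · intro h; apply hw0; exact pow_eq_zero_iff (two_ne_zero) |>.1 (by grind)
  · intro h; apply hw0; grind

lemma count_two (h2 : (2 : F) = 0) {w : F} (hw : w ^ 3 = w + 1) :
    {u : F | u ^ 3 + u ^ 2 + 1 = 0}.ncard = 3 := by
  refine Eq.trans ?_ (count_one h2 hw)
  refine Eq.trans ?_
    (Set.ncard_image_of_injective {u : F | u ^ 3 + u + 1 = 0} (add_left_injective (1 : F)))
  congr 1
  ext u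
  constructor
  · intro hu
    refine ⟨u + 1, ?_, ?_⟩
    · simp only [Set.mem_setOf_eq] at hu ⊢; grind
    · simp only; grind
  · rintro ⟨v, hv, rfl⟩
    simp only [Set.mem_setOf_eq] at hv ⊢; grind

lemma count_T (h2 : (2 : F) = 0) {w : F} (hw : w ^ 3 = w + 1) (σ : F → F)
    (hσ : (∀ u : F, u ^ 8 = u → σ u = u) ∨ (∀ u : F, u ^ 8 = u → σ u = u ^ 4)) :
    {u : F | u ^ 8 = u ∧ σ u * (u + 1) ^ 2 = 1}.ncard = 3 := by
  rcases hσ with hσ | hσ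
  · rw [← count_one h2 hw]
    congr 1
    ext u
    simp only [Set.mem_setOf_eq]
    constructor
    · rintro ⟨h8, h⟩
      rw [hσ u h8] at h
      grind
    · intro h
      have h8 : u ^ 8 = u := by grind
      refine ⟨h8, ?_⟩
      rw [hσ u h8]; grind
  · rw [← count_two h2 hw]
    congr 1
    ext u
    simp only [Set.mem_setOf_eq]
    constructor
    · rintro ⟨h8, h⟩
      rw [hσ u h8] at h
      have : (u ^ 3 + u ^ 2 + 1) ^ 2 = 0 := by grind
      exact pow_eq_zero_iff (two_ne_zero) |>.1 this
    · intro h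
      have h8 : u ^ 8 = u := by grind
      refine ⟨h8, ?_⟩
      rw [hσ u h8]; grind

lemma main_count [IsAlgClosed F] (h2 : (2 : F) = 0) (σ : F →+* F) {h e : F}
    (hh : σ h = h) (he : σ e = e) (he0 : e ≠ 0) (he1 : e + 1 ≠ 0)
    (hcube : h ^ 3 = e ^ 2 + e + 1)
    (hσ : (∀ u : F, u ^ 8 = u → σ u = u) ∨ (∀ u : F, u ^ 8 = u → σ u = u ^ 4)) :
    (SolSet σ h e).ncard = 3 := by
  obtain ⟨w, hw⟩ : ∃ w : F, w ^ 3 = w + 1 := by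
    obtain ⟨w, hw⟩ := IsAlgClosed.exists_root (X ^ 3 + X + 1 : F[X])
      (by have : (X ^ 3 + X + 1 : F[X]).degree = 3 := by compute_degree!
          rw [this]; norm_num)
    simp [IsRoot] at hw
    exact ⟨w, by grind⟩
  obtain ⟨a, hra⟩ : ∃ a : F, a ^ 3 + h * a + e = 0 := by
    obtain ⟨w, hw⟩ := IsAlgClosed.exists_root (X ^ 3 + C h * X + C e : F[X])
      (by have : (X ^ 3 + C h * X + C e : F[X]).degree = 3 := by compute_degree!
          rw [this]; norm_num)
    simp [IsRoot] at hw
    exact ⟨w, hw⟩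
  obtain ⟨b, hrb⟩ : ∃ b : F, b ^ 2 + a * b + (a ^ 2 + h) = 0 := by
    obtain ⟨w, hw⟩ := IsAlgClosed.exists_root (X ^ 2 + C a * X + C (a ^ 2 + h) : F[X])
      (by have : (X ^ 2 + C a * X + C (a ^ 2 + h) : F[X]).degree = 2 := by compute_degree!
          rw [this]; norm_num)
    simp [IsRoot] at hw
    exact ⟨w, by linear_combination hw⟩
  have hab : h = a ^ 2 + a * b + b ^ 2 := by grind
  have heab : e = a * b * (a + b) := by grind
  have ha0 : a ≠ 0 := by rintro rfl; simp at heab; exact he0 heab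
  have hb0 : b ≠ 0 := by rintro rfl; simp at heab; exact he0 heab
  have hc : a + b ≠ 0 := by intro h0; rw [h0, mul_zero] at heab; exact he0 heab
  have hne : a ≠ b := fun h => hc ((add_eq_zero_char2 h2).2 h)
  have hhe : h ^ 3 + e ^ 2 ≠ 0 := by
    intro h0; apply he1; grind
  have hσ1 : ∀ u : F, u ^ 8 = u → σ u = u ∨ σ u = u ^ 4 := by
    intro u hu; rcases hσ with h | h
    · exact Or.inl (h u hu)
    · exact Or.inr (h u hu)
  have hσ3 : ∀ u : F, u ^ 8 = u → σ (σ (σ u)) = u := by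
    intro u hu; rcases hσ with h | h
    · rw [h u hu, h u hu, h u hu]
    · rw [h u hu, map_pow, h u hu, map_pow, map_pow, h u hu]
      calc ((u ^ 4) ^ 4) ^ 4 = (u ^ 8) ^ 8 := by ring
        _ = u := by rw [hu, hu]
  have hfac : ∀ x : F, x ^ 3 + h * x + e = 0 → x = a ∨ x = b ∨ x = a + b := by
    intro x hx
    have hf : x ^ 3 + h * x + e = (x + a) * ((x + b) * (x + (a + b))) := by
      rw [hab, heab]; grind
    rw [hf, mul_eq_zero, mul_eq_zero, add_eq_zero_char2 h2, add_eq_zero_char2 h2,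
      add_eq_zero_char2 h2] at hx
    exact hx
  have hsa := hfac (σ a) (by
    have := congrArg σ hra
    simpa only [map_add, map_mul, map_pow, hh, he, map_zero] using this)
  have hrb' : b ^ 3 + h * b + e = 0 := by rw [hab, heab]; grind
  have hsb := hfac (σ b) (by
    have := congrArg σ hrb'
    simpa only [map_add, map_mul, map_pow, hh, he, map_zero] using this)
  have hsab : σ a ≠ σ b := fun h => hne (σ.injective h)
  -- the discriminant condition forces an even permutation
  have hαβ : (a ^ 3 + a ^ 2 * b + b ^ 3 + 1) * (a ^ 3 + a * b ^ 2 + b ^ 3 + 1) = 0 := by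
    rw [hab, heab] at hcube
    clear * - hcube h2
    grind
  have heven : σ a ^ 2 * σ b + a ^ 2 * b + (σ a ^ 3 + σ b ^ 3 + a ^ 3 + b ^ 3) = 0 := by
    rcases mul_eq_zero.1 hαβ with h0 | h0
    · have := congrArg σ h0
      simp only [map_add, map_mul, map_pow, map_one, map_zero] at this
      clear * - this h0 h2
      grind
    · have := congrArg σ h0
      simp only [map_add, map_mul, map_pow, map_one, map_zero] at this
      have h9 : σ a * σ b * (σ a + σ b) = a * b * (a + b) := by
        have h10 := congrArg σ heab
        simp only [map_add, map_mul] at h10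
        rw [← h10, he, heab]
      clear * - this h0 h2 h9
      grind
  rcases hsa with hsa | hsa | hsa <;> rcases hsb with hsb | hsb | hsb
  · exact absurd (hsa.trans hsb.symm) hsab
  · rw [case_one h2 σ hh he hab heab he0 hsa hsb hσ1, Set.ncard_eq_three]
    refine ⟨_, _, _, hne, ?_, ?_, rfl⟩
    · intro h; apply hb0; grind
    · intro h; apply ha0; grind
  · exfalso; apply he0; rw [hsa, hsb] at heven; rw [heab]; grind
  · exfalso; apply he0; rw [hsa, hsb] at heven; rw [heab]; grind
  · exact absurd (hsa.trans hsb.symm) hsab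
  · rw [case_two h2 σ hh he hab heab he0 hhe hsa hsb hσ3, count_T h2 hw σ hσ]
  · rw [case_two h2 σ hh he (a := a) (b := a + b) (by grind) (by grind) he0 hhe hsa
      (by rw [map_add, hsa, hsb]; grind) hσ3, count_T h2 hw σ hσ]
  · exfalso; apply he0; rw [hsa, hsb] at heven; rw [heab]; grind
  · exact absurd (hsa.trans hsb.symm) hsab

lemma pow_iter_s5 {u : F} (hu : u ^ 8 = u) (k r : ℕ) : u ^ 2 ^ (3 * k + r) = u ^ 2 ^ r := by
  have h1 : u ^ 2 ^ (3 * k) = u := by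
    induction k with
    | zero => simp
    | succ k ih =>
      rw [Nat.mul_succ, pow_add, pow_mul, ih]; exact hu
  rw [pow_add, pow_mul, h1]

end helpers

/-- Corollary 1.4: for `q = 2^m` with `m ≢ 1 (mod 3)` and `h, e ∈ F_q \ F_2` with
`h³ = e² + e + 1`, the polynomial `X^(2q²+1) + hX + e` has exactly three roots in `F_{q³}`. -/
theorem zheng_conjecture
    (m : ℕ) (hm : 0 < m) (hm3 : ¬ m % 3 = 1)
    (q : ℕ) (hq : q = 2 ^ m)
    (h e : K) (hhq : h ^ q = h) (hh2 : h ^ 2 ≠ h)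
    (heq : e ^ q = e) (he2 : e ^ 2 ≠ e)
    (hcube : h ^ 3 = e ^ 2 + e + 1) :
    {x : K | x ^ q ^ 3 = x ∧ x ^ (2 * q ^ 2 + 1) + h * x + e = 0}.ncard = 3 := by
  haveI : CharP K 2 := inferInstance
  have h2 : (2 : K) = 0 := by exact_mod_cast CharP.cast_eq_zero K 2
  have hs : ∀ x : K, iterateFrobenius K 2 m x = x ^ q := by
    intro x; rw [iterateFrobenius_def, hq]
  have hset : {x : K | x ^ q ^ 3 = x ∧ x ^ (2 * q ^ 2 + 1) + h * x + e = 0}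
      = SolSet (iterateFrobenius K 2 m) h e := by
    ext x
    simp only [SolSet, Set.mem_setOf_eq, hs]
    have e1 : ((x ^ q) ^ q) ^ q = x ^ q ^ 3 := by
      rw [← pow_mul, ← pow_mul]; congr 1; ring
    have e2 : ((x ^ q) ^ q) ^ 2 * x = x ^ (2 * q ^ 2 + 1) := by
      rw [← pow_mul, ← pow_mul, ← pow_succ]; congr 1; ring
    rw [e1, e2]
  rw [hset]
  apply main_count h2 _ (by rw [hs, hhq]) (by rw [hs, heq]) _ _ hcube
  · have h3 : m % 3 = 0 ∨ m % 3 = 2 := by omega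
    rcases h3 with h3 | h3
    · left; intro u hu
      have := pow_iter_s5 hu (m / 3) 0
      rw [hs, hq, show m = 3 * (m / 3) + 0 by omega, this]; simp
    · right; intro u hu
      have := pow_iter_s5 hu (m / 3) 2
      rw [hs, hq, show m = 3 * (m / 3) + 2 by omega, this]; norm_num
  · rintro rfl; simp at he2
  · intro h0
    have := (add_eq_zero_char2 h2).1 h0
    subst this; simp at he2
end
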